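/- Suppose g : ℕ → ℂ is multiplicative and satisfies Condition (A) for some κ = ξ + iη with η² < 2ξ + 1, satisfies Condition (B), and satisfies Condition (C) with some β < ξ + 1. Then for all x ≥ 2 one has M_g(x) = c(g)·log^κ x + O_g((log x)^{β−1}), where c(g) = Γ(κ+1)^{−1} ∏_p (1 − 1/p)^κ (1 + g(p)/p + g(p²)/p² + ⋯), the product over primes converging. -/

import Mathlib

open Filter Finset
open scoped ENNReal NNReal

/-- `g` is multiplicative: `g 1 = 1` and `g (m*n) = g m * g n` for coprime `m, n`. -/
def IsMult (g : ℕ → ℂ) : Prop :=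
  g 1 = 1 ∧ ∀ m n : ℕ, Nat.Coprime m n → g (m * n) = g m * g n

/-- `M_g(x) = ∑_{n ≤ x} g(n)/n`. -/
noncomputable def Mg (g : ℕ → ℂ) (x : ℝ) : ℂ :=
  ∑ n ∈ Finset.Icc 1 ⌊x⌋₊, g n / (n : ℂ)

/-- The finite set of primes `p ≤ x`. -/
noncomputable def primesLE (x : ℝ) : Finset ℕ :=
  (Finset.range (⌊x⌋₊ + 1)).filter Nat.Prime

/-- Condition (A): `∑_{p ≤ x} g(p) log p / p = κ log x + O(1)` for all `x ≥ 2`. -/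
def CondA (g : ℕ → ℂ) (κ : ℂ) : Prop :=
  ∃ C : ℝ, ∀ x : ℝ, 2 ≤ x →
    ‖(∑ p ∈ primesLE x, g p * (Real.log p : ℂ) / (p : ℂ)) - κ * (Real.log x : ℂ)‖ ≤ C

/-- Condition (B):
`∑_p (|g(p)| log p / p) ∑_{r≥1} |g(p^r)|/p^r + ∑_p ∑_{r≥2} |g(p^r)| log(p^r)/p^r < ∞`. -/
def CondB (g : ℕ → ℂ) : Prop :=
  (∑' p : Nat.Primes,
      ((‖g (p : ℕ)‖₊ : ℝ≥0∞) * ENNReal.ofReal (Real.log (p : ℕ)) / ((p : ℕ) : ℝ≥0∞)) *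
        ∑' r : ℕ, (‖g ((p : ℕ) ^ (r + 1))‖₊ : ℝ≥0∞) / (((p : ℕ) ^ (r + 1) : ℕ) : ℝ≥0∞))
    + (∑' p : Nat.Primes, ∑' r : ℕ,
        (‖g ((p : ℕ) ^ (r + 2))‖₊ : ℝ≥0∞) *
          ENNReal.ofReal (Real.log ((p : ℕ) ^ (r + 2) : ℕ)) /
          (((p : ℕ) ^ (r + 2) : ℕ) : ℝ≥0∞)) < ⊤

/-- Condition (C): `∏_{p ≤ x} (1 + |g(p)|/p) ≪ (log x)^β` for all `x ≥ 2`. -/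
def CondC (g : ℕ → ℂ) (β : ℝ) : Prop :=
  ∃ C : ℝ, ∀ x : ℝ, 2 ≤ x →
    ∏ p ∈ primesLE x, (1 + ‖g p‖ / (p : ℝ)) ≤ C * Real.log x ^ β

/-- The Euler factor `(1 - 1/p)^κ (1 + g(p)/p + g(p²)/p² + ⋯)` (principal branch power). -/
noncomputable def eulerFactor (g : ℕ → ℂ) (κ : ℂ) (p : ℕ) : ℂ :=
  (1 - 1 / (p : ℂ)) ^ κ * ∑' r : ℕ, g (p ^ r) / (p : ℂ) ^ r

/-! Put `f n = g n / n`, `M t = M_g (e ^ t)` and `F t = ∫₀ᵗ M`. Writing `log n` as a sum over the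
prime powers dividing `n`, Condition (A) evaluates the contribution of the primes to
`∑_{n ≤ e ^ t} f n log n = t * M t - F t`, Condition (B) bounds the rest, and one finds
`t * M t = (κ + 1) * F t + O (∑_{n ≤ e ^ t} ‖f n‖)`, where by Condition (C) the error is
`O (t ^ β)`. Since `F' = M`, this differential inequality says that `F t * t ^ (-κ - 1)` has
derivative `O (t ^ (β - κ.re - 2))`, which is integrable at infinity as `β < κ.re + 1`; hence
`M t = c * t ^ κ + O (t ^ (β - 1))` for some constant `c`.

To identify `c`, let `s → 0⁺`. The Dirichlet series of `f` is `s` times the Laplace transform of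
`M`, so `s ^ κ * ∑ f n n ^ (-s) → c * Γ (κ + 1)`. On the other side `ζ (1 + s) ^ (-κ)` times the
Dirichlet series is an Euler product. Dividing each factor by the exponential of its first-order
part leaves an absolutely convergent product, which is continuous up to `s = 0` by dominated
convergence, while by Condition (A) the first-order parts `(g p - κ) / p` have a convergent sum, to
which Abel's theorem applies. As `s * ζ (1 + s) → 1`, the limit is the product over the primes. -/

theorem mem_primesLE {x : ℝ} {p : ℕ} : p ∈ primesLE x ↔ p.Prime ∧ (p : ℝ) ≤ x := by
  rw [primesLE, mem_filter, mem_range, Nat.lt_succ_iff, and_comm]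
  exact and_congr_right fun hp => Nat.le_floor_iff' hp.ne_zero

section Mertens

theorem log_factorial_eq_sum_primesLE (N : ℕ) :
    Real.log N.factorial = ∑ p ∈ primesLE N, N.factorial.factorization p * Real.log p := by
  rw [Real.log_nat_eq_sum_factorization, Finsupp.sum]
  refine sum_subset (fun p hp => ?_) fun p _ hp => ?_
  · obtain ⟨hp, hdvd, -⟩ := Nat.mem_primeFactors.mp hp
    exact mem_primesLE.mpr ⟨hp, mod_cast hp.dvd_factorial.mp hdvd⟩
  · rw [Finsupp.notMem_support_iff.mp hp, Nat.cast_zero, zero_mul]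

theorem div_sub_one_le_factorization_factorial {p : ℕ} (hp : p.Prime) (N : ℕ) :
    (N : ℝ) / p - 1 ≤ N.factorial.factorization p := by
  have hdvd : p ^ (N / p) ∣ N.factorial := by
    refine dvd_trans ?_ (Nat.factorial_dvd_factorial (Nat.mul_div_le N p))
    rw [hp.pow_dvd_iff_le_factorization (Nat.factorial_ne_zero _),
      Nat.factorization_factorial_mul hp]
    exact Nat.le_add_left _ _
  calc (N : ℝ) / p - 1 ≤ ⌊(N : ℝ) / p⌋₊ := (Nat.sub_one_lt_floor _).le
    _ = (N / p : ℕ) := by rw [Nat.floor_div_eq_div]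
    _ ≤ N.factorial.factorization p :=
      mod_cast (hp.pow_dvd_iff_le_factorization (Nat.factorial_ne_zero _)).mp hdvd

theorem factorization_factorial_le_div {p : ℕ} (hp : p.Prime) (N : ℕ) :
    (N.factorial.factorization p : ℝ) ≤ N / (p - 1) := by
  have := Fact.mk hp
  have legendre := sub_one_mul_padicValNat_factorial (p := p) N
  rw [← Nat.factorization_def _ hp] at legendre
  rw [le_div_iff₀ (sub_pos.mpr (mod_cast hp.one_lt)), mul_comm, ← Nat.cast_pred hp.pos]
  exact mod_cast legendre.le.trans (Nat.sub_le _ _)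

theorem log_div_sub_one_le {x : ℝ} (hx : 2 ≤ x) :
    Real.log x / (x - 1) ≤ Real.log x / x + 4 * x ^ (-(3 / 2) : ℝ) := by
  have hlog : Real.log x ≤ 2 * x ^ (1 / 2 : ℝ) := by
    linarith [Real.log_le_rpow_div (x := x) (by positivity) (ε := 1 / 2) (by norm_num)]
  have hpow : x ^ (-(3 / 2) : ℝ) = x ^ (1 / 2 : ℝ) / x ^ 2 := by
    rw [← Real.rpow_two, ← Real.rpow_sub (by linarith)]
    norm_num
  calc Real.log x / (x - 1) = Real.log x / x + Real.log x / (x * (x - 1)) := by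
        have : x - 1 ≠ 0 := by linarith
        field_simp
        ring
    _ ≤ Real.log x / x + 2 * x ^ (1 / 2 : ℝ) / (x ^ 2 / 2) := by
        gcongr
        nlinarith
    _ = Real.log x / x + 4 * x ^ (-(3 / 2) : ℝ) := by
        rw [hpow]
        ring

theorem log_factorial_le_mul_log (N : ℕ) : Real.log N.factorial ≤ N * Real.log N := by
  rw [← Real.log_pow]
  exact Real.log_le_log (mod_cast N.factorial_pos) (mod_cast N.factorial_le_pow)

theorem mul_log_sub_le_log_factorial {N : ℕ} (hN : 1 ≤ N) :
    N * Real.log N - N ≤ Real.log N.factorial := by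
  have hN' : (0 : ℝ) < N := mod_cast hN
  have hfac : (0 : ℝ) < N.factorial := mod_cast N.factorial_pos
  have h := Real.log_le_log (by positivity) (Real.pow_div_factorial_le_exp (N : ℝ) hN'.le N)
  rw [Real.log_exp, Real.log_div (by positivity) hfac.ne', Real.log_pow] at h
  linarith

theorem sum_log_div_primesLE_le {N : ℕ} (hN : 1 ≤ N) :
    ∑ p ∈ primesLE N, Real.log p / p ≤ Real.log N + Real.log 4 := by
  have htheta : ∑ p ∈ primesLE N, Real.log p ≤ Real.log 4 * N := by
    refine le_of_eq_of_le (sum_congr ?_ fun _ _ => rfl)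
      ((Chebyshev.theta_eq_sum_primesLE (N : ℝ)).ge.trans
        (Chebyshev.theta_le_log4_mul_x N.cast_nonneg))
    ext p
    simp [primesLE, Nat.primesLE, Nat.primesBelow]
  refine le_of_mul_le_mul_left ?_ (Nat.cast_pos.mpr hN : (0 : ℝ) < N)
  calc (N : ℝ) * ∑ p ∈ primesLE N, Real.log p / p
      = ∑ p ∈ primesLE N, ((N : ℝ) / p - 1) * Real.log p + ∑ p ∈ primesLE N, Real.log p := by
        rw [mul_sum, ← sum_add_distrib]
        exact sum_congr rfl fun _ _ => by ring
    _ ≤ ∑ p ∈ primesLE N, N.factorial.factorization p * Real.log p + Real.log 4 * N := by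
        gcongr with p hp
        exact div_sub_one_le_factorization_factorial (mem_primesLE.mp hp).1 N
    _ ≤ N * (Real.log N + Real.log 4) := by
        rw [← log_factorial_eq_sum_primesLE]
        linarith [log_factorial_le_mul_log N]

theorem le_sum_log_div_primesLE {N : ℕ} (hN : 1 ≤ N) :
    Real.log N - (1 + ∑' n : ℕ, 4 * (n : ℝ) ^ (-(3 / 2) : ℝ)) ≤
      ∑ p ∈ primesLE N, Real.log p / p := by
  have hsum : Summable fun n : ℕ => 4 * (n : ℝ) ^ (-(3 / 2) : ℝ) :=
    (Real.summable_nat_rpow.mpr (by norm_num)).mul_left 4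
  rw [sub_le_iff_le_add]
  refine le_of_mul_le_mul_left ?_ (Nat.cast_pos.mpr hN : (0 : ℝ) < N)
  calc N * Real.log N
      ≤ ∑ p ∈ primesLE N, N.factorial.factorization p * Real.log p + N := by
        rw [← log_factorial_eq_sum_primesLE]
        linarith [mul_log_sub_le_log_factorial hN]
    _ ≤ ∑ p ∈ primesLE N, N * (Real.log p / p + 4 * (p : ℝ) ^ (-(3 / 2) : ℝ)) + N := by
        refine add_le_add (sum_le_sum fun p hp => ?_) le_rfl
        have hp := (mem_primesLE.mp hp).1
        calc N.factorial.factorization p * Real.log p ≤ N / (p - 1) * Real.log p := by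
              gcongr
              exact factorization_factorial_le_div hp N
          _ = N * (Real.log p / (p - 1)) := by ring
          _ ≤ N * (Real.log p / p + 4 * (p : ℝ) ^ (-(3 / 2) : ℝ)) := by
              gcongr
              exact log_div_sub_one_le (mod_cast hp.two_le)
    _ = N * (∑ p ∈ primesLE N, Real.log p / p +
          (1 + ∑ p ∈ primesLE N, 4 * (p : ℝ) ^ (-(3 / 2) : ℝ))) := by
        rw [← mul_sum, sum_add_distrib]
        ring
    _ ≤ N * (∑ p ∈ primesLE N, Real.log p / p +
          (1 + ∑' n : ℕ, 4 * (n : ℝ) ^ (-(3 / 2) : ℝ))) := by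
        gcongr
        exact hsum.sum_le_tsum _ fun n _ => by positivity

theorem exists_abs_sum_log_div_primesLE_sub_log_le :
    ∃ C : ℝ, ∀ N : ℕ, 1 ≤ N → |∑ p ∈ primesLE N, Real.log p / p - Real.log N| ≤ C := by
  refine ⟨max (Real.log 4) (1 + ∑' n : ℕ, 4 * (n : ℝ) ^ (-(3 / 2) : ℝ)), fun N hN => ?_⟩
  rw [abs_le, neg_le_iff_add_nonneg]
  constructor
  · linarith [le_sum_log_div_primesLE hN,
      le_max_right (Real.log 4) (1 + ∑' n : ℕ, 4 * (n : ℝ) ^ (-(3 / 2) : ℝ))]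
  · exact (sub_le_iff_le_add'.mpr (sum_log_div_primesLE_le hN)).trans (le_max_left _ _)

end Mertens

theorem exists_tendsto_sum_range_of_norm_sum_mul_log_le {a : ℕ → ℂ} {C : ℝ}
    (h : ∀ n, ‖∑ k ∈ range n, a k * (Real.log k : ℂ)‖ ≤ C) :
    ∃ G : ℂ, Tendsto (fun N => ∑ k ∈ range N, a k) atTop (nhds G) := by
  have hlog_pos (n : ℕ) : 0 < Real.log (n + 2 : ℕ) :=
    Real.log_pos (by push_cast; linarith [n.cast_nonneg (α := ℝ)])
  have hanti : Antitone fun n : ℕ => (Real.log (n + 2 : ℕ))⁻¹ := fun m n hmn =>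
    inv_anti₀ (hlog_pos m) (Real.log_le_log (by positivity) (mod_cast Nat.add_le_add_right hmn 2))
  have hzero : Tendsto (fun n : ℕ => (Real.log (n + 2 : ℕ))⁻¹) atTop (nhds 0) :=
    (Real.tendsto_log_atTop.comp
      (tendsto_natCast_atTop_atTop.comp (tendsto_add_atTop_nat 2))).inv_tendsto_atTop
  have hbound (n : ℕ) :
      ‖∑ k ∈ range n, a (k + 2) * (Real.log (k + 2 : ℕ) : ℂ)‖ ≤ C := by
    simpa only [sum_range_succ', zero_add, Nat.cast_one, Nat.cast_zero, Real.log_one,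
      Real.log_zero, Complex.ofReal_zero, mul_zero, add_zero] using h (n + 2)
  obtain ⟨G, hG⟩ := cauchySeq_tendsto_of_complete
    (hanti.cauchySeq_series_mul_of_tendsto_zero_of_bounded hzero hbound)
  refine ⟨G + a 1 + a 0, (tendsto_add_atTop_iff_nat 2).mp ?_⟩
  refine ((hG.add_const (a 1)).add_const (a 0)).congr fun N => ?_
  rw [sum_range_succ', sum_range_succ', zero_add]
  congr 2
  refine sum_congr rfl fun k _ => ?_
  rw [Complex.real_smul, Complex.ofReal_inv, mul_comm,
    mul_inv_cancel_right₀ (Complex.ofReal_ne_zero.mpr (hlog_pos k).ne')]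

section Tauberian

section

variable {E : Type*} [NormedAddCommGroup E] [NormedSpace ℝ E] {H H' : ℝ → E} {a C d : ℝ}

theorem norm_sub_le_of_norm_deriv_right_le_rpow (ha : 0 < a) (hd : d ≠ 0)
    (hH : ContinuousOn H (Set.Ici a))
    (hH' : ∀ t ∈ Set.Ici a, HasDerivWithinAt H (H' t) (Set.Ici t) t)
    (hbound : ∀ t ∈ Set.Ici a, ‖H' t‖ ≤ C * t ^ (-d - 1)) {x y : ℝ} (hax : a ≤ x) (hxy : x ≤ y) :
    ‖H y - H x‖ ≤ C / d * x ^ (-d) - C / d * y ^ (-d) := by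
  have hne {t : ℝ} (ht : x ≤ t) : t ≠ 0 := by linarith
  have hB {t : ℝ} (ht : x ≤ t) :
      HasDerivAt (fun t => C / d * x ^ (-d) - C / d * t ^ (-d)) (C * t ^ (-d - 1)) t := by
    refine (((Real.hasDerivAt_rpow_const (p := -d) (Or.inl (hne ht))).const_mul (C / d)).const_sub
      (C / d * x ^ (-d))).congr_deriv ?_
    field_simp
  refine image_norm_le_of_norm_deriv_right_le_deriv_boundary' (f := fun t => H t - H x)
    ((hH.mono fun t ht => hax.trans ht.1).sub continuousOn_const)
    (fun t ht => (hH' t (hax.trans ht.1)).sub_const _) (by simp)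
    (fun t ht => (hB ht.1).continuousAt.continuousWithinAt)
    (fun t ht => (hB ht.1).hasDerivWithinAt) (fun t ht => hbound t (hax.trans ht.1))
    (Set.right_mem_Icc.mpr hxy)

theorem exists_norm_sub_le_of_norm_deriv_right_le_rpow [CompleteSpace E] (ha : 0 < a) (hd : 0 < d)
    (hH : ContinuousOn H (Set.Ici a))
    (hH' : ∀ t ∈ Set.Ici a, HasDerivWithinAt H (H' t) (Set.Ici t) t)
    (hbound : ∀ t ∈ Set.Ici a, ‖H' t‖ ≤ C * t ^ (-d - 1)) :
    ∃ L : E, ∀ t ∈ Set.Ici a, ‖H t - L‖ ≤ C / d * t ^ (-d) := by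
  have hC : 0 ≤ C := nonneg_of_mul_nonneg_left
    ((norm_nonneg _).trans (hbound a Set.self_mem_Ici)) (Real.rpow_pos_of_pos ha _)
  have hsub {x y : ℝ} (hax : a ≤ x) (hxy : x ≤ y) : ‖H x - H y‖ ≤ C / d * x ^ (-d) := by
    have : 0 ≤ C / d * y ^ (-d) := by
      have : 0 < y := by linarith
      positivity
    rw [norm_sub_rev]
    linarith [norm_sub_le_of_norm_deriv_right_le_rpow ha hd.ne' hH hH' hbound hax hxy]
  have hlim : Tendsto (fun t : ℝ => C / d * t ^ (-d)) atTop (nhds 0) := by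
    simpa using (tendsto_rpow_neg_atTop hd).const_mul (C / d)
  have hcauchy : CauchySeq H := by
    refine Metric.cauchySeq_iff'.mpr fun ε hε => ?_
    obtain ⟨x, hxε, hax⟩ := ((hlim.eventually_lt_const hε).and (eventually_ge_atTop a)).exists
    exact ⟨x, fun y hxy => by simpa only [dist_eq_norm'] using (hsub hax hxy).trans_lt hxε⟩
  obtain ⟨L, hL⟩ := cauchySeq_tendsto_of_complete hcauchy
  refine ⟨L, fun t ht => le_of_tendsto (hL.const_sub (H t)).norm ?_⟩
  filter_upwards [eventually_ge_atTop t] with y hty using hsub ht hty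

end

theorem hasDerivWithinAt_mul_cpow_neg {F : ℝ → ℂ} {m κ : ℂ} {s : Set ℝ} {t : ℝ} (ht : 0 < t)
    (hF : HasDerivWithinAt F m s t) :
    HasDerivWithinAt (fun u : ℝ => F u * (u : ℂ) ^ (-κ))
      ((t * m - κ * F t) * (t : ℂ) ^ (-κ - 1)) s t := by
  have ht' : (t : ℂ) ≠ 0 := Complex.ofReal_ne_zero.mpr ht.ne'
  have hpow : HasDerivAt (fun u : ℝ => (u : ℂ) ^ (-κ)) (-κ * (t : ℂ) ^ (-κ - 1)) t := by
    simpa using ((hasDerivAt_id (t : ℂ)).cpow_const (c := -κ) (by simp [ht])).comp_ofReal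
  refine (hF.mul hpow.hasDerivWithinAt).congr_deriv ?_
  rw [Complex.cpow_sub _ _ ht', Complex.cpow_one]
  field_simp
  ring

theorem exists_norm_primitive_sub_mul_cpow_le_of_norm_mul_sub_le
    {M F : ℝ → ℂ} {κ : ℂ} {β C a : ℝ}
    (ha : 0 < a) (hβ : β < κ.re) (hF : ContinuousOn F (Set.Ici a))
    (hFM : ∀ t ∈ Set.Ici a, HasDerivWithinAt F (M t) (Set.Ici t) t)
    (h : ∀ t ∈ Set.Ici a, ‖t * M t - κ * F t‖ ≤ C * t ^ β) :
    ∃ L : ℂ, ∀ t ∈ Set.Ici a, ‖F t - L * (t : ℂ) ^ κ‖ ≤ C / (κ.re - β) * t ^ β := by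
  have hpos {t : ℝ} (ht : t ∈ Set.Ici a) : 0 < t := ha.trans_le ht
  obtain ⟨L, hL⟩ := exists_norm_sub_le_of_norm_deriv_right_le_rpow
    (H := fun t : ℝ => F t * (t : ℂ) ^ (-κ)) (C := C) ha (sub_pos.mpr hβ)
    (hF.mul fun t ht => (Complex.continuousAt_ofReal_cpow_const t (-κ)
      (Or.inr (hpos ht).ne')).continuousWithinAt)
    (fun t ht => hasDerivWithinAt_mul_cpow_neg (hpos ht) (hFM t ht)) fun t ht => by
      rw [norm_mul, Complex.norm_cpow_eq_rpow_re_of_pos (hpos ht)]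
      refine (mul_le_mul_of_nonneg_right (h t ht) (by have := hpos ht; positivity)).trans_eq ?_
      rw [mul_assoc, ← Real.rpow_add (hpos ht)]
      congr 2
      simp only [Complex.sub_re, Complex.neg_re, Complex.one_re]
      ring
  refine ⟨L, fun t ht => ?_⟩
  have ht0 : 0 < t := hpos ht
  have ht' : (t : ℂ) ≠ 0 := Complex.ofReal_ne_zero.mpr ht0.ne'
  calc ‖F t - L * (t : ℂ) ^ κ‖ = ‖F t * (t : ℂ) ^ (-κ) - L‖ * t ^ κ.re := by
        rw [← Complex.norm_cpow_eq_rpow_re_of_pos ht0, ← norm_mul, sub_mul, mul_assoc,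
          ← Complex.cpow_add _ _ ht', neg_add_cancel, Complex.cpow_zero, mul_one]
    _ ≤ C / (κ.re - β) * t ^ (-(κ.re - β)) * t ^ κ.re := by
        gcongr
        exact hL t ht
    _ = C / (κ.re - β) * t ^ β := by
        rw [mul_assoc, ← Real.rpow_add ht0, neg_sub, sub_add_cancel]

theorem exists_norm_sub_mul_cpow_le_of_norm_mul_sub_le {M F : ℝ → ℂ} {κ : ℂ} {β C a : ℝ}
    (ha : 0 < a) (hβ : β < κ.re) (hF : ContinuousOn F (Set.Ici a))
    (hFM : ∀ t ∈ Set.Ici a, HasDerivWithinAt F (M t) (Set.Ici t) t)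
    (h : ∀ t ∈ Set.Ici a, ‖t * M t - κ * F t‖ ≤ C * t ^ β) :
    ∃ c : ℂ, ∃ C' : ℝ, ∀ t ∈ Set.Ici a, ‖M t - c * (t : ℂ) ^ (κ - 1)‖ ≤ C' * t ^ (β - 1) := by
  obtain ⟨L, hL⟩ := exists_norm_primitive_sub_mul_cpow_le_of_norm_mul_sub_le ha hβ hF hFM h
  refine ⟨κ * L, C + ‖κ‖ * (C / (κ.re - β)), fun t ht => ?_⟩
  have ht0 : 0 < t := ha.trans_le ht
  have ht' : (t : ℂ) ≠ 0 := Complex.ofReal_ne_zero.mpr ht0.ne'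
  have hsplit : (t : ℂ) * (M t - κ * L * (t : ℂ) ^ (κ - 1)) =
      (t * M t - κ * F t) + κ * (F t - L * (t : ℂ) ^ κ) := by
    rw [Complex.cpow_sub _ _ ht', Complex.cpow_one]
    field_simp
    ring
  refine le_of_mul_le_mul_left ?_ ht0
  calc t * ‖M t - κ * L * (t : ℂ) ^ (κ - 1)‖
      = ‖(t * M t - κ * F t) + κ * (F t - L * (t : ℂ) ^ κ)‖ := by
        rw [← hsplit, norm_mul, Complex.norm_of_nonneg ht0.le]
    _ ≤ C * t ^ β + ‖κ‖ * (C / (κ.re - β) * t ^ β) := by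
        refine (norm_add_le _ _).trans (add_le_add (h t ht) ?_)
        rw [norm_mul]
        gcongr
        exact hL t ht
    _ = t * ((C + ‖κ‖ * (C / (κ.re - β))) * t ^ (β - 1)) := by
        rw [Real.rpow_sub_one ht0.ne']
        field_simp

end Tauberian

/-- The summatory function `∑_{n ≤ e ^ t} f n`, parametrised by `t = log x` so that powers of
`log x` become powers of `t`. -/
noncomputable def summatory (f : ℕ → ℂ) (t : ℝ) : ℂ :=
  ∑ n ∈ Icc 1 ⌊Real.exp t⌋₊, f n

/-- The primitive `∑_{n ≤ e ^ t} f n (t - log n)` of `summatory f`. -/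
noncomputable def summatoryPrimitive (f : ℕ → ℂ) (t : ℝ) : ℂ :=
  ∑ n ∈ Icc 1 ⌊Real.exp t⌋₊, f n * (t - Real.log n : ℝ)

section Summatory

variable (f : ℕ → ℂ)

theorem mem_Icc_floor_exp {n : ℕ} {t : ℝ} :
    n ∈ Icc 1 ⌊Real.exp t⌋₊ ↔ 0 < n ∧ Real.log n ≤ t := by
  rw [mem_Icc, Nat.le_floor_iff (Real.exp_pos t).le]
  exact and_congr_right fun hn => (Real.log_le_iff_le_exp (Nat.cast_pos.mpr hn)).symm

theorem mul_summatory_sub_summatoryPrimitive (t : ℝ) :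
    t * summatory f t - summatoryPrimitive f t =
      ∑ n ∈ Icc 1 ⌊Real.exp t⌋₊, f n * (Real.log n : ℂ) := by
  rw [summatory, summatoryPrimitive, mul_sum, ← sum_sub_distrib]
  refine sum_congr rfl fun n _ => ?_
  push_cast
  ring

theorem eventually_floor_exp_eq (t : ℝ) :
    ∀ᶠ u in nhdsWithin t (Set.Ici t), ⌊Real.exp u⌋₊ = ⌊Real.exp t⌋₊ := by
  have hlt : ∀ᶠ u in nhds t, Real.exp u < ⌊Real.exp t⌋₊ + 1 :=
    Real.continuous_exp.continuousAt.eventually_lt_const (Nat.lt_floor_add_one _)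
  filter_upwards [nhdsWithin_le_nhds hlt, self_mem_nhdsWithin] with u hu htu
  exact (Nat.floor_eq_iff (Real.exp_pos u).le).mpr
    ⟨(Nat.floor_le (Real.exp_pos t).le).trans (Real.exp_le_exp.mpr htu), hu⟩

theorem hasDerivWithinAt_summatoryPrimitive (t : ℝ) :
    HasDerivWithinAt (summatoryPrimitive f) (summatory f t) (Set.Ici t) t := by
  have hderiv : HasDerivAt
      (fun u : ℝ => ∑ n ∈ Icc 1 ⌊Real.exp t⌋₊, f n * (u - Real.log n : ℝ)) (summatory f t) t := by
    refine HasDerivAt.fun_sum fun n _ => ?_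
    simpa using (((hasDerivAt_id t).sub_const (Real.log n)).ofReal_comp).const_mul (f n)
  refine hderiv.hasDerivWithinAt.congr_of_eventuallyEq ?_ rfl
  filter_upwards [eventually_floor_exp_eq t] with u hu
  rw [summatoryPrimitive, hu]

theorem summatoryPrimitive_eq_sum_max {t u : ℝ} (hut : u ≤ t) :
    summatoryPrimitive f u =
      ∑ n ∈ Icc 1 ⌊Real.exp t⌋₊, f n * (max (u - Real.log n) 0 : ℝ) := by
  have hsub : Icc 1 ⌊Real.exp u⌋₊ ⊆ Icc 1 ⌊Real.exp t⌋₊ :=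
    Icc_subset_Icc_right (Nat.floor_mono (Real.exp_le_exp.mpr hut))
  rw [← sum_subset hsub fun n hn hnu => ?_]
  · refine sum_congr rfl fun n hn => ?_
    rw [max_eq_left (sub_nonneg.mpr (mem_Icc_floor_exp.mp hn).2)]
  · have hlt : u < Real.log n :=
      not_le.mp fun h => hnu (mem_Icc_floor_exp.mpr ⟨(mem_Icc.mp hn).1, h⟩)
    rw [max_eq_right (sub_neg.mpr hlt).le, Complex.ofReal_zero, mul_zero]

theorem continuous_summatoryPrimitive : Continuous (summatoryPrimitive f) := by
  refine continuous_iff_continuousAt.mpr fun t => ?_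
  have hcont : Continuous fun u : ℝ =>
      ∑ n ∈ Icc 1 ⌊Real.exp (t + 1)⌋₊, f n * (max (u - Real.log n) 0 : ℝ) := by
    fun_prop
  refine hcont.continuousAt.congr ?_
  filter_upwards [eventually_le_nhds (lt_add_one t)] with u hu
  exact (summatoryPrimitive_eq_sum_max f hu).symm

end Summatory

section Abelian

open MeasureTheory Asymptotics

theorem summatory_log (a : ℕ → ℂ) {n : ℕ} (hn : n ≠ 0) :
    summatory a (Real.log n) = ∑ k ∈ Icc 1 n, a k := by
  rw [summatory, Real.exp_log (mod_cast hn.bot_lt), Nat.floor_natCast]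

theorem measurable_summatory (a : ℕ → ℂ) : Measurable (summatory a) :=
  (measurable_from_nat (f := fun n => ∑ k ∈ Icc 1 n, a k)).comp
    (Nat.measurable_floor.comp Real.measurable_exp)

variable {a : ℕ → ℂ}

theorem integral_Ioi_one_sum_Icc_floor_mul_cpow (s : ℝ) :
    ∫ x in Set.Ioi (1 : ℝ), (∑ k ∈ Icc 1 ⌊x⌋₊, a k) * (x : ℂ) ^ (-((s : ℂ) + 1)) =
      ∫ t in Set.Ioi (0 : ℝ), summatory a t * (Real.exp (-(s * t)) : ℝ) := by
  have himage : Real.exp '' Set.Ioi 0 = Set.Ioi 1 := by simp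
  rw [← himage, integral_image_eq_integral_abs_deriv_smul measurableSet_Ioi
    (fun t _ => (Real.hasDerivAt_exp t).hasDerivWithinAt) Real.exp_injective.injOn]
  refine setIntegral_congr_fun measurableSet_Ioi fun t _ => ?_
  have hpow : (Real.exp t : ℂ) ^ (-((s : ℂ) + 1)) = (Real.exp t ^ (-(s + 1)) : ℝ) := by
    rw [Complex.ofReal_cpow (Real.exp_pos t).le]
    push_cast
    rfl
  rw [abs_of_pos (Real.exp_pos t), Complex.real_smul, hpow, mul_left_comm, ← Complex.ofReal_mul,
    ← Real.exp_mul, ← Real.exp_add, summatory]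
  ring_nf

theorem LSeries_eq_mul_integral_summatory {s r : ℝ} (hs : 0 < s) (ha : LSeriesSummable a s)
    (hM : summatory a =O[atTop] fun t => t ^ r) :
    LSeries a s = s * ∫ t in Set.Ioi (0 : ℝ), summatory a t * (Real.exp (-(s * t)) : ℝ) := by
  have hO : (fun n => ∑ k ∈ Icc 1 n, a k) =O[atTop] fun n : ℕ => (n : ℝ) ^ (s / 2) := by
    have hlog := (hM.comp_tendsto Real.tendsto_log_atTop).trans
      (isLittleO_log_rpow_rpow_atTop r (half_pos hs)).isBigO
    refine (hlog.comp_tendsto tendsto_natCast_atTop_atTop).congr' ?_ .rfl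
    filter_upwards [eventually_ne_atTop 0] with n hn using summatory_log a hn
  rw [LSeries_eq_mul_integral a (half_pos hs).le (by simpa using half_lt_self hs) ha hO,
    integral_Ioi_one_sum_Icc_floor_mul_cpow]

theorem cpow_mul_LSeries_eq_integral {s r : ℝ} (κ : ℂ) (hs : 0 < s) (ha : LSeriesSummable a s)
    (hM : summatory a =O[atTop] fun t => t ^ r) :
    (s : ℂ) ^ κ * LSeries a s =
      ∫ u in Set.Ioi (0 : ℝ), (s : ℂ) ^ κ * summatory a (s⁻¹ * u) * (Real.exp (-u) : ℝ) := by
  have hscale := integral_comp_mul_left_Ioi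
    (fun t => summatory a t * (Real.exp (-(s * t)) : ℝ)) 0 (inv_pos.mpr hs)
  simp only [mul_inv_cancel_left₀ hs.ne', mul_zero, inv_inv, Complex.real_smul] at hscale
  simp_rw [mul_assoc]
  rw [LSeries_eq_mul_integral_summatory hs ha hM, ← hscale, integral_const_mul]

theorem exists_norm_summatory_le {ξ b : ℝ} (hb : b ≤ 0)
    (hM : summatory a =O[atTop] fun t => t ^ ξ) :
    ∃ K, ∀ t, 0 < t → ‖summatory a t‖ ≤ K * (t ^ ξ + t ^ b) := by
  obtain ⟨K, hK, hbound⟩ := hM.exists_nonneg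
  obtain ⟨T, hT⟩ := eventually_atTop.mp (isBigOWith_iff.mp hbound)
  set T' := max T 1
  have hT' : 0 < T' := one_pos.trans_le (le_max_right _ _)
  set B := ∑ n ∈ Icc 1 ⌊Real.exp T'⌋₊, ‖a n‖
  have : 0 ≤ B := sum_nonneg fun _ _ => norm_nonneg _
  refine ⟨max K (B / T' ^ b), fun t ht => ?_⟩
  have hξ0 : 0 ≤ t ^ ξ := (Real.rpow_pos_of_pos ht _).le
  have hb0 : 0 ≤ t ^ b := (Real.rpow_pos_of_pos ht _).le
  rcases le_total T' t with hTt | htT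
  · calc ‖summatory a t‖ ≤ K * t ^ ξ := by
          simpa [Real.norm_of_nonneg hξ0] using hT t ((le_max_left _ _).trans hTt)
      _ ≤ max K (B / T' ^ b) * (t ^ ξ + t ^ b) := by
          gcongr
          · exact le_max_left _ _
          · exact le_add_of_nonneg_right hb0
  · calc ‖summatory a t‖ ≤ B := (norm_sum_le _ _).trans <| sum_le_sum_of_subset_of_nonneg
          (Icc_subset_Icc_right (Nat.floor_mono (Real.exp_le_exp.mpr htT)))
          fun _ _ _ => norm_nonneg _
      _ = B / T' ^ b * T' ^ b := (div_mul_cancel₀ _ (Real.rpow_pos_of_pos hT' b).ne').symm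
      _ ≤ max K (B / T' ^ b) * (t ^ ξ + t ^ b) := by
          have hpow : T' ^ b ≤ t ^ b := Real.rpow_le_rpow_of_nonpos ht htT hb
          gcongr
          · exact le_max_right _ _
          · exact hpow.trans (le_add_of_nonneg_left hξ0)

theorem norm_cpow_mul_inv_mul_le {M : ℝ → ℂ} {κ : ℂ} {b K s u : ℝ} (hb : b ≤ κ.re)
    (hM : ∀ t, 0 < t → ‖M t‖ ≤ K * (t ^ κ.re + t ^ b)) (hs : 0 < s) (hs1 : s ≤ 1) (hu : 0 < u) :
    ‖(s : ℂ) ^ κ * M (s⁻¹ * u)‖ ≤ K * (u ^ κ.re + u ^ b) := by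
  have hK : 0 ≤ K := by
    have := (norm_nonneg _).trans (hM 1 one_pos)
    simp only [Real.one_rpow] at this
    linarith
  have hcancel (r : ℝ) : s ^ κ.re * (s⁻¹ * u) ^ r = s ^ (κ.re - r) * u ^ r := by
    rw [Real.mul_rpow (inv_pos.mpr hs).le hu.le, Real.inv_rpow hs.le, Real.rpow_sub hs]
    ring
  calc ‖(s : ℂ) ^ κ * M (s⁻¹ * u)‖ = s ^ κ.re * ‖M (s⁻¹ * u)‖ := by
        rw [norm_mul, Complex.norm_cpow_eq_rpow_re_of_pos hs]
    _ ≤ s ^ κ.re * (K * ((s⁻¹ * u) ^ κ.re + (s⁻¹ * u) ^ b)) := by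
        gcongr
        exact hM _ (by positivity)
    _ = K * (u ^ κ.re + s ^ (κ.re - b) * u ^ b) := by
        rw [mul_left_comm, mul_add, hcancel, hcancel, sub_self, Real.rpow_zero, one_mul]
    _ ≤ K * (u ^ κ.re + u ^ b) := by
        gcongr
        exact mul_le_of_le_one_left (by positivity)
          (Real.rpow_le_one hs.le hs1 (sub_nonneg.mpr hb))

theorem integrableOn_rpow_mul_exp_neg {b : ℝ} (hb : -1 < b) :
    IntegrableOn (fun u => u ^ b * Real.exp (-u)) (Set.Ioi 0) := by
  simpa [mul_comm] using Real.GammaIntegral_convergent (s := b + 1) (by linarith)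

theorem tendsto_cpow_mul_summatory_inv_mul {κ c : ℂ} {u : ℝ} (hu : 0 < u)
    (hM : (fun t => summatory a t - c * (t : ℂ) ^ κ) =o[atTop] fun t => t ^ κ.re) :
    Tendsto (fun s : ℝ => (s : ℂ) ^ κ * summatory a (s⁻¹ * u)) (nhdsWithin 0 (Set.Ioi 0))
      (nhds (c * (u : ℂ) ^ κ)) := by
  have hatTop : Tendsto (fun s : ℝ => s⁻¹ * u) (nhdsWithin 0 (Set.Ioi 0)) atTop :=
    tendsto_inv_nhdsGT_zero.atTop_mul_const hu
  have hzero : Tendsto (fun s : ℝ => (s : ℂ) ^ κ *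
      (summatory a (s⁻¹ * u) - c * ((s⁻¹ * u : ℝ) : ℂ) ^ κ))
      (nhdsWithin 0 (Set.Ioi 0)) (nhds 0) := by
    refine IsBigO.trans_tendsto (g'' := fun s : ℝ => u ^ κ.re * ((s⁻¹ * u) ^ κ.re)⁻¹ *
      ‖summatory a (s⁻¹ * u) - c * ((s⁻¹ * u : ℝ) : ℂ) ^ κ‖) ?_ ?_
    · refine .of_bound 1 ?_
      filter_upwards [self_mem_nhdsWithin] with s hs
      have hs : 0 < s := hs
      rw [norm_mul, Complex.norm_cpow_eq_rpow_re_of_pos hs, one_mul, Real.norm_of_nonneg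
        (by positivity), Real.mul_rpow (by positivity) hu.le, Real.inv_rpow hs.le]
      have := (Real.rpow_pos_of_pos hu κ.re).ne'
      field_simp
      rfl
    · have := ((hM.comp_tendsto hatTop).norm_left.tendsto_div_nhds_zero).const_mul (u ^ κ.re)
      rw [mul_zero] at this
      refine this.congr fun s => ?_
      simp only [Function.comp_apply]
      ring
  refine (zero_add (c * (u : ℂ) ^ κ) ▸ hzero.add_const (c * (u : ℂ) ^ κ)).congr' ?_
  filter_upwards [self_mem_nhdsWithin] with s hs
  have hs : 0 < s := hs
  have hs' : (s : ℂ) ≠ 0 := Complex.ofReal_ne_zero.mpr hs.ne'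
  rw [Complex.ofReal_mul, Complex.mul_cpow_ofReal_nonneg (inv_pos.mpr hs).le hu.le,
    Complex.ofReal_inv, Complex.inv_cpow _ _ (by simp [Complex.arg_ofReal_of_nonneg hs.le,
      Real.pi_ne_zero.symm])]
  have : (s : ℂ) ^ κ ≠ 0 := by simp [Complex.cpow_eq_zero_iff, hs']
  field_simp
  ring

theorem tendsto_cpow_mul_LSeries {κ c : ℂ} (hκ : -1 < κ.re)
    (ha : ∀ s : ℝ, 0 < s → LSeriesSummable a s)
    (hM : (fun t => summatory a t - c * (t : ℂ) ^ κ) =o[atTop] fun t => t ^ κ.re) :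
    Tendsto (fun s : ℝ => (s : ℂ) ^ κ * LSeries a s) (nhdsWithin 0 (Set.Ioi 0))
      (nhds (c * Complex.Gamma (κ + 1))) := by
  have hMO : summatory a =O[atTop] fun t : ℝ => t ^ κ.re := by
    have hmain : (fun t : ℝ => c * (t : ℂ) ^ κ) =O[atTop] fun t => t ^ κ.re := by
      refine .of_bound ‖c‖ ?_
      filter_upwards [eventually_gt_atTop 0] with t ht
      rw [norm_mul, Complex.norm_cpow_eq_rpow_re_of_pos ht, Real.norm_of_nonneg (by positivity)]
    simpa using hM.isBigO.add hmain
  obtain ⟨K, hK⟩ := exists_norm_summatory_le (min_le_right κ.re 0) hMO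
  have hgamma : c * Complex.Gamma (κ + 1) =
      ∫ u in Set.Ioi (0 : ℝ), c * (u : ℂ) ^ κ * (Real.exp (-u) : ℝ) := by
    rw [Complex.Gamma_eq_integral (by simpa using by linarith), Complex.GammaIntegral,
      add_sub_cancel_right, ← integral_const_mul]
    exact integral_congr_ae (.of_forall fun u => by ring)
  rw [hgamma]
  refine Tendsto.congr' (f₁ := fun s : ℝ => ∫ u in Set.Ioi (0 : ℝ),
    (s : ℂ) ^ κ * summatory a (s⁻¹ * u) * (Real.exp (-u) : ℝ)) ?_ ?_
  · filter_upwards [self_mem_nhdsWithin] with s hs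
    exact (cpow_mul_LSeries_eq_integral κ hs (ha s hs) hMO).symm
  refine tendsto_integral_filter_of_dominated_convergence
    (fun u => K * (u ^ κ.re * Real.exp (-u) + u ^ min κ.re 0 * Real.exp (-u))) ?_ ?_ ?_ ?_
  · refine .of_forall fun s => Measurable.aestronglyMeasurable ?_
    have := (measurable_summatory a).comp (measurable_const_mul s⁻¹)
    exact (this.const_mul _).mul (by fun_prop)
  · filter_upwards [Ioc_mem_nhdsGT one_pos] with s hs
    refine (ae_restrict_iff' measurableSet_Ioi).mpr (.of_forall fun u hu => ?_)
    rw [norm_mul, Complex.norm_of_nonneg (Real.exp_pos _).le, ← add_mul, ← mul_assoc]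
    gcongr
    exact norm_cpow_mul_inv_mul_le (min_le_left _ _) hK hs.1 hs.2 hu
  · exact ((integrableOn_rpow_mul_exp_neg hκ).add
      (integrableOn_rpow_mul_exp_neg (lt_min hκ (by norm_num)))).const_mul K
  · refine (ae_restrict_iff' measurableSet_Ioi).mpr (.of_forall fun u hu => ?_)
    exact (tendsto_cpow_mul_summatory_inv_mul hu hM).mul_const _

end Abelian

section Weights

/-- The contribution `‖f p‖ log p ∑_{r ≥ 1} ‖f (p ^ r)‖ + ∑_{r ≥ 2} ‖f (p ^ r)‖ log (p ^ r)` of the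
prime `p` to Condition (B), written for `f n = g n / n`. -/
noncomputable def primePowerWeight (f : ℕ → ℂ) (p : ℕ) : ℝ :=
  ‖f p‖ * Real.log p * ∑' r : ℕ, ‖f (p ^ (r + 1))‖ +
    ∑' r : ℕ, ‖f (p ^ (r + 2))‖ * ((r + 2 : ℕ) * Real.log p)

/-- Condition (B) for `f n = g n / n` in terms of real series; the convergence of the inner series
has to be spelled out because a divergent real `tsum` is `0`. -/
structure HasSummableWeights (f : ℕ → ℂ) : Prop where
  summable_norm_mul : ∀ p : ℕ, p.Prime → Summable fun r : ℕ => ‖f (p ^ r)‖ * r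
  summable_weight : Summable fun p : Nat.Primes => primePowerWeight f p

/-- The function `n ↦ g n / n`, with value `0` at `0`. -/
noncomputable def divId (g : ℕ → ℂ) (n : ℕ) : ℂ := g n / n

theorem IsMult.divId {g : ℕ → ℂ} (hg : IsMult g) : IsMult (divId g) := by
  refine ⟨by simp [_root_.divId, hg.1], fun m n hmn => ?_⟩
  rw [_root_.divId, hg.2 m n hmn, Nat.cast_mul, mul_div_mul_comm]
  rfl

theorem nnnorm_mul_ofReal_div_natCast (g : ℕ → ℂ) (x : ℝ) {n : ℕ} (hn : n ≠ 0) :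
    (‖g n‖₊ : ℝ≥0∞) * ENNReal.ofReal x / n = ENNReal.ofReal (‖divId g n‖ * x) := by
  have hn' : (0 : ℝ) < n := mod_cast hn.bot_lt
  rw [divId, norm_div, Complex.norm_natCast, div_mul_eq_mul_div, ENNReal.ofReal_div_of_pos hn',
    ENNReal.ofReal_mul (norm_nonneg _), ofReal_norm, ENNReal.ofReal_natCast]
  rfl

theorem log_two_le_log_prime {p : ℕ} (hp : p.Prime) : Real.log 2 ≤ Real.log p :=
  Real.log_le_log two_pos (mod_cast hp.two_le)

theorem summable_of_tsum_ofReal_lt_top {ι : Type*} {w : ι → ℝ} (hw : ∀ i, 0 ≤ w i)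
    (h : ∑' i, ENNReal.ofReal (w i) < ⊤) : Summable w :=
  (ENNReal.summable_toReal h.ne).congr fun i => ENNReal.toReal_ofReal (hw i)

theorem summable_norm_pow_of_summable_norm_pow_mul {f : ℕ → ℂ} {p : ℕ}
    (h : Summable fun r : ℕ => ‖f (p ^ r)‖ * r) : Summable fun r : ℕ => ‖f (p ^ r)‖ :=
  (summable_nat_add_iff 1).mp <| .of_nonneg_of_le (fun _ => norm_nonneg _)
    (fun r => le_mul_of_one_le_right (norm_nonneg _) (by simp))
    ((summable_nat_add_iff 1).mpr h)

section CondB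

variable {g : ℕ → ℂ}

theorem CondB.tsum_tsum_ofReal_lt_top (hB : CondB g) :
    ∑' p : Nat.Primes, ∑' r : ℕ, ENNReal.ofReal
      (‖divId g (p ^ (r + 2))‖ * ((r + 2 : ℕ) * Real.log p)) < ⊤ := by
  refine (tsum_congr fun p => tsum_congr fun r => ?_).trans_lt (ENNReal.add_lt_top.mp hB).2
  rw [nnnorm_mul_ofReal_div_natCast g _ (pow_ne_zero _ p.2.ne_zero),
    Nat.cast_pow, Real.log_pow]

theorem CondB.summable_norm_mul_log (hB : CondB g) (p : Nat.Primes) :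
    Summable fun r : ℕ => ‖divId g (p ^ (r + 2))‖ * ((r + 2 : ℕ) * Real.log p) :=
  summable_of_tsum_ofReal_lt_top (fun _ => by positivity)
    ((ENNReal.le_tsum p).trans_lt hB.tsum_tsum_ofReal_lt_top)

theorem CondB.summable_norm_mul (hB : CondB g) {p : ℕ} (hp : p.Prime) :
    Summable fun r : ℕ => ‖divId g (p ^ r)‖ * r := by
  have hlog : Real.log p ≠ 0 := (Real.log_pos (mod_cast hp.one_lt)).ne'
  refine (summable_nat_add_iff 2).mp
    ((summable_mul_right_iff hlog).mp ((hB.summable_norm_mul_log ⟨p, hp⟩).congr fun r => ?_))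
  exact (mul_assoc _ _ _).symm

theorem CondB.hasSummableWeights (hB : CondB g) : HasSummableWeights (divId g) := by
  refine ⟨fun p hp => hB.summable_norm_mul hp, .add ?_ ?_⟩
  · refine summable_of_tsum_ofReal_lt_top
      (fun p => mul_nonneg (by positivity) (tsum_nonneg fun _ => norm_nonneg _)) ?_
    refine (tsum_congr fun p => ?_).trans_lt (ENNReal.add_lt_top.mp hB).1
    have hsum := (summable_nat_add_iff 1).mpr
      (summable_norm_pow_of_summable_norm_pow_mul (hB.summable_norm_mul p.2))
    rw [ENNReal.ofReal_mul (by positivity), ENNReal.ofReal_tsum_of_nonneg (fun _ => norm_nonneg _)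
      hsum, nnnorm_mul_ofReal_div_natCast g _ p.2.ne_zero]
    congr 1
    refine tsum_congr fun r => ?_
    simpa using (nnnorm_mul_ofReal_div_natCast g 1
      (pow_ne_zero (r + 1) p.2.ne_zero)).symm
  · refine summable_of_tsum_ofReal_lt_top (fun p => tsum_nonneg fun _ => by positivity) ?_
    refine (tsum_congr fun p => ?_).trans_lt hB.tsum_tsum_ofReal_lt_top
    rw [ENNReal.ofReal_tsum_of_nonneg (fun _ => by positivity) (hB.summable_norm_mul_log p)]

end CondB

section Consequences

variable {f : ℕ → ℂ} {p : ℕ}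

theorem primePowerWeight_nonneg (f : ℕ → ℂ) (p : ℕ) : 0 ≤ primePowerWeight f p :=
  add_nonneg (mul_nonneg (by positivity) (tsum_nonneg fun _ => norm_nonneg _))
    (tsum_nonneg fun _ => by positivity)

theorem HasSummableWeights.summable_norm (hf : HasSummableWeights f) (hp : p.Prime) :
    Summable fun r : ℕ => ‖f (p ^ r)‖ :=
  summable_norm_pow_of_summable_norm_pow_mul (hf.summable_norm_mul p hp)

theorem HasSummableWeights.sq_norm_mul_log_two_le (hf : HasSummableWeights f) (hp : p.Prime) :
    ‖f p‖ ^ 2 * Real.log 2 ≤ primePowerWeight f p := by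
  have hle : ‖f p‖ ≤ ∑' r : ℕ, ‖f (p ^ (r + 1))‖ := by
    simpa using ((summable_nat_add_iff 1).mpr (hf.summable_norm hp)).le_tsum 0
      fun _ _ => norm_nonneg _
  calc ‖f p‖ ^ 2 * Real.log 2 = ‖f p‖ * Real.log 2 * ‖f p‖ := by ring
    _ ≤ ‖f p‖ * Real.log p * ∑' r : ℕ, ‖f (p ^ (r + 1))‖ := by
        gcongr
        exact mod_cast hp.two_le
    _ ≤ primePowerWeight f p := le_add_of_nonneg_right (tsum_nonneg fun _ => by positivity)

theorem HasSummableWeights.tsum_norm_mul_log_two_le (hf : HasSummableWeights f) (hp : p.Prime) :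
    (∑' r : ℕ, ‖f (p ^ (r + 2))‖) * Real.log 2 ≤ primePowerWeight f p := by
  have hsum : Summable fun r : ℕ => ‖f (p ^ (r + 2))‖ * ((r + 2 : ℕ) * Real.log p) :=
    (((summable_nat_add_iff 2).mpr (hf.summable_norm_mul p hp)).mul_right (Real.log p)).congr
      fun r => mul_assoc _ _ _
  rw [← tsum_mul_right]
  calc ∑' r : ℕ, ‖f (p ^ (r + 2))‖ * Real.log 2
      ≤ ∑' r : ℕ, ‖f (p ^ (r + 2))‖ * ((r + 2 : ℕ) * Real.log p) := by
        refine Summable.tsum_le_tsum (fun r => ?_)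
          (((summable_nat_add_iff 2).mpr (hf.summable_norm hp)).mul_right _) hsum
        gcongr
        exact (log_two_le_log_prime hp).trans (le_mul_of_one_le_left
          (Real.log_natCast_nonneg p) (mod_cast Nat.le_add_left 1 (r + 1)))
    _ ≤ primePowerWeight f p :=
        le_add_of_nonneg_left (mul_nonneg (by positivity) (tsum_nonneg fun _ => norm_nonneg _))

theorem HasSummableWeights.sum_primesLE_le (hf : HasSummableWeights f) (x : ℝ) :
    ∑ p ∈ primesLE x, primePowerWeight f p ≤ ∑' p : Nat.Primes, primePowerWeight f p := by
  rw [primesLE, ← subtype_map, sum_map]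
  exact Summable.sum_le_tsum (ι := Nat.Primes) _ (fun p _ => primePowerWeight_nonneg f p)
    hf.summable_weight

end Consequences

end Weights

section Convolution

theorem primesLE_div_swap {x : ℝ} (hx : 0 ≤ x) (u v : ℕ → ℂ) :
    ∑ p ∈ primesLE x, ∑ m ∈ Icc 1 ⌊x / p⌋₊, u p * v m =
      ∑ m ∈ Icc 1 ⌊x⌋₊, ∑ p ∈ primesLE (x / m), u p * v m := by
  refine sum_comm' fun p m => ?_
  simp only [mem_primesLE, mem_Icc]
  constructor
  · rintro ⟨⟨hp, -⟩, hm, hmx⟩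
    have hp0 : (0 : ℝ) < p := mod_cast hp.pos
    have hm0 : (0 : ℝ) < m := mod_cast hm
    have hmul : (m : ℝ) * p ≤ x :=
      (le_div_iff₀ hp0).mp ((Nat.le_floor_iff (by positivity)).mp hmx)
    refine ⟨⟨hp, (le_div_iff₀ hm0).mpr (by linarith)⟩, hm, (Nat.le_floor_iff hx).mpr ?_⟩
    exact (le_mul_of_one_le_right hm0.le (mod_cast hp.one_le)).trans hmul
  · rintro ⟨⟨hp, hpx⟩, hm, -⟩
    have hp0 : (0 : ℝ) < p := mod_cast hp.pos
    have hm0 : (0 : ℝ) < m := mod_cast hm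
    have hmul : (p : ℝ) * m ≤ x := (le_div_iff₀ hm0).mp hpx
    refine ⟨⟨hp, (le_mul_of_one_le_right hp0.le (mod_cast hm)).trans hmul⟩, hm,
      (Nat.le_floor_iff (by positivity)).mpr ((le_div_iff₀ hp0).mpr (by linarith))⟩

theorem sum_filter_dvd_div {M : Type*} [AddCommMonoid M] {p : ℕ} (hp : 0 < p) (N : ℕ) (h : ℕ → M) :
    ∑ n ∈ Icc 1 N with p ∣ n, h (n / p) = ∑ m ∈ Icc 1 (N / p), h m := by
  refine sum_nbij' (· / p) (p * ·) ?_ ?_ ?_ ?_ fun _ _ => rfl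
  · simp only [mem_filter, mem_Icc]
    rintro _ ⟨⟨hn, hnN⟩, m, rfl⟩
    exact ⟨Nat.div_pos (Nat.le_of_dvd hn (dvd_mul_right p m)) hp, Nat.div_le_div_right hnN⟩
  · simp only [mem_filter, mem_Icc]
    rintro m ⟨hm, hmN⟩
    exact ⟨⟨Nat.mul_pos hp hm, (Nat.mul_le_of_le_div _ _ _ hmN).trans_eq' (mul_comm _ _)⟩,
      dvd_mul_right p m⟩
  · exact fun n hn => Nat.mul_div_cancel' (mem_filter.mp hn).2
  · exact fun m _ => Nat.mul_div_cancel_left m hp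

-- Every `n` is determined by the pair of `n.factorization p` and its prime-to-`p` part.
theorem sum_filter_pow_dvd_le {p : ℕ} (hp : p.Prime) (j N : ℕ) {w h : ℕ → ℝ} (hw : ∀ r, 0 ≤ w r)
    (hw_sum : Summable w) (hh : ∀ m, 0 ≤ h m) :
    ∑ n ∈ Icc 1 N with p ^ j ∣ n, w (n.factorization p - j) * h (ordCompl[p] n) ≤
      (∑' r, w r) * ∑ m ∈ Icc 1 N, h m := by
  set S := {n ∈ Icc 1 N | p ^ j ∣ n}
  have hinj : Set.InjOn (fun n : ℕ => (n.factorization p - j, ordCompl[p] n)) S := by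
    intro n hn n' hn' heq
    simp only [S, coe_filter, mem_Icc, Set.mem_ofPred_eq] at hn hn'
    have hle := (hp.pow_dvd_iff_le_factorization (by omega)).mp hn.2
    have hle' := (hp.pow_dvd_iff_le_factorization (by omega)).mp hn'.2
    simp only [Prod.mk.injEq] at heq
    rw [← Nat.ordProj_mul_ordCompl_eq_self n p, ← Nat.ordProj_mul_ordCompl_eq_self n' p, heq.2,
      show n.factorization p = n'.factorization p by omega]
  have hmaps : S.image (fun n : ℕ => (n.factorization p - j, ordCompl[p] n)) ⊆
      range N ×ˢ Icc 1 N := by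
    refine image_subset_iff.mpr fun n hn => ?_
    simp only [S, mem_filter, mem_Icc] at hn
    have hn0 : n ≠ 0 := by omega
    have hlt := Nat.factorization_lt p hn0
    exact mem_product.mpr ⟨mem_range.mpr (by omega), mem_Icc.mpr
      ⟨Nat.ordCompl_pos p hn0, (Nat.ordCompl_le n p).trans hn.1.2⟩⟩
  calc ∑ n ∈ S, w (n.factorization p - j) * h (ordCompl[p] n)
      = ∑ x ∈ S.image (fun n : ℕ => (n.factorization p - j, ordCompl[p] n)), w x.1 * h x.2 :=
        (sum_image (f := fun x : ℕ × ℕ => w x.1 * h x.2) hinj).symm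
    _ ≤ ∑ x ∈ range N ×ˢ Icc 1 N, w x.1 * h x.2 :=
        sum_le_sum_of_subset_of_nonneg hmaps fun x _ _ => mul_nonneg (hw _) (hh _)
    _ = (∑ r ∈ range N, w r) * ∑ m ∈ Icc 1 N, h m := by rw [sum_mul_sum, sum_product]
    _ ≤ (∑' r, w r) * ∑ m ∈ Icc 1 N, h m := by
        gcongr
        · exact sum_nonneg fun m _ => hh m
        · exact hw_sum.sum_le_tsum _ fun r _ => hw r

theorem sum_mul_log_eq_sum_primesLE (f : ℕ → ℂ) (N : ℕ) :
    ∑ n ∈ Icc 1 N, f n * (Real.log n : ℂ) =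
      ∑ p ∈ primesLE N, ∑ n ∈ Icc 1 N with p ∣ n,
        f n * (n.factorization p * Real.log p : ℝ) := by
  have hlog (n : ℕ) : f n * (Real.log n : ℂ) =
      ∑ p ∈ n.primeFactors, f n * (n.factorization p * Real.log p : ℝ) := by
    rw [Real.log_nat_eq_sum_factorization, Finsupp.sum, Nat.support_factorization,
      Complex.ofReal_sum, mul_sum]
  simp_rw [hlog]
  refine sum_comm' fun n p => ?_
  simp only [mem_primesLE, mem_filter, mem_Icc, Nat.mem_primeFactors, Nat.cast_le]
  constructor
  · rintro ⟨hn, hp, hdvd, -⟩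
    exact ⟨⟨hn, hdvd⟩, hp, (Nat.le_of_dvd hn.1 hdvd).trans hn.2⟩
  · rintro ⟨⟨hn, hdvd⟩, hp, -⟩
    exact ⟨hn, hp, hdvd, Nat.one_le_iff_ne_zero.mp hn.1⟩

theorem IsMult.apply_eq_ordProj_mul_ordCompl {f : ℕ → ℂ} (hf : IsMult f) {p n : ℕ} (hp : p.Prime)
    (hn : n ≠ 0) : f n = f (ordProj[p] n) * f (ordCompl[p] n) := by
  rw [← hf.2 _ _ ((Nat.coprime_ordCompl hp hn).pow_left _), Nat.ordProj_mul_ordCompl_eq_self]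

theorem IsMult.apply_div_prime {f : ℕ → ℂ} (hf : IsMult f) {p n : ℕ} (hp : p.Prime) (hn : n ≠ 0)
    (hdvd : p ∣ n) : f (n / p) = f (p ^ (n.factorization p - 1)) * f (ordCompl[p] n) := by
  have hv : n.factorization p ≠ 0 := (hp.factorization_pos_of_dvd hn hdvd).ne'
  have hdiv : n / p = p ^ (n.factorization p - 1) * ordCompl[p] n := by
    refine Nat.div_eq_of_eq_mul_right hp.pos ?_
    rw [← mul_assoc, mul_pow_sub_one hv, Nat.ordProj_mul_ordCompl_eq_self]
  rw [hdiv, hf.2 _ _ ((Nat.coprime_ordCompl hp hn).pow_left _)]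

theorem IsMult.mul_factorization_mul_log_sub {f : ℕ → ℂ} (hf : IsMult f) {p n : ℕ} (hp : p.Prime)
    (hn : n ≠ 0) (hdvd : p ∣ n) :
    f n * (n.factorization p * Real.log p : ℝ) - f p * Real.log p * f (n / p) =
      (f (ordProj[p] n) * n.factorization p - f p * f (p ^ (n.factorization p - 1))) *
        Real.log p * f (ordCompl[p] n) := by
  rw [hf.apply_eq_ordProj_mul_ordCompl hp hn, hf.apply_div_prime hp hn hdvd]
  push_cast
  ring

/-- The part of `primePowerWeight f p` involving `f (p ^ (r + 1))` times `f p`, and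
`f (p ^ (r + 2))`. -/
noncomputable def primePowerWeightTerm (f : ℕ → ℂ) (p r : ℕ) : ℝ :=
  ‖f p‖ * Real.log p * ‖f (p ^ (r + 1))‖ + ‖f (p ^ (r + 2))‖ * ((r + 2 : ℕ) * Real.log p)

theorem primePowerWeightTerm_nonneg (f : ℕ → ℂ) (p r : ℕ) : 0 ≤ primePowerWeightTerm f p r := by
  rw [primePowerWeightTerm]
  positivity

theorem hasSum_primePowerWeightTerm {f : ℕ → ℂ} {p : ℕ}
    (hsum : Summable fun r : ℕ => ‖f (p ^ r)‖ * r) :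
    HasSum (primePowerWeightTerm f p) (primePowerWeight f p) := by
  refine .add (.mul_left _ (Summable.hasSum ?_)) (Summable.hasSum ?_)
  · exact (summable_nat_add_iff 1).mpr (summable_norm_pow_of_summable_norm_pow_mul hsum)
  · exact (((summable_nat_add_iff 2).mpr hsum).mul_right (Real.log p)).congr
      fun r => mul_assoc _ _ _

section

variable {f : ℕ → ℂ} {p n : ℕ}

theorem IsMult.mul_factorization_mul_log_sub_eq_zero (hf : IsMult f) (hp : p.Prime) (hn : n ≠ 0)
    (hdvd : p ∣ n) (hdvd_sq : ¬p ^ 2 ∣ n) :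
    f n * (n.factorization p * Real.log p : ℝ) - f p * Real.log p * f (n / p) = 0 := by
  have hpos := hp.factorization_pos_of_dvd hn hdvd
  have hlt := (hp.pow_dvd_iff_le_factorization hn).not.mp hdvd_sq
  rw [hf.mul_factorization_mul_log_sub hp hn hdvd, show n.factorization p = 1 by omega]
  simp [hf.1]

theorem IsMult.norm_mul_factorization_mul_log_sub_le (hf : IsMult f) (hp : p.Prime) (hn : n ≠ 0)
    (hdvd : p ^ 2 ∣ n) :
    ‖f n * (n.factorization p * Real.log p : ℝ) - f p * Real.log p * f (n / p)‖ ≤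
      primePowerWeightTerm f p (n.factorization p - 2) * ‖f (ordCompl[p] n)‖ := by
  obtain ⟨k, hk⟩ := Nat.exists_eq_add_of_le' ((hp.pow_dvd_iff_le_factorization hn).mp hdvd)
  rw [hf.mul_factorization_mul_log_sub hp hn ((dvd_pow_self p two_ne_zero).trans hdvd), norm_mul,
    norm_mul, Complex.norm_real, Real.norm_of_nonneg (Real.log_natCast_nonneg p), hk,
    Nat.add_sub_cancel, show k + 2 - 1 = k + 1 from rfl]
  gcongr
  calc ‖f (p ^ (k + 2)) * (k + 2 : ℕ) - f p * f (p ^ (k + 1))‖ * Real.log p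
      ≤ (‖f (p ^ (k + 2))‖ * (k + 2 : ℕ) + ‖f p‖ * ‖f (p ^ (k + 1))‖) * Real.log p := by
        gcongr
        refine (norm_sub_le _ _).trans_eq ?_
        rw [norm_mul, norm_mul, Complex.norm_natCast]
    _ = primePowerWeightTerm f p k := by rw [primePowerWeightTerm]; ring

-- The terms with `p ∥ n` cancel, so only multiples of `p ^ 2` contribute.
theorem IsMult.norm_sum_factorization_mul_log_sub_le (hf : IsMult f) (hp : p.Prime)
    (hsum : Summable fun r : ℕ => ‖f (p ^ r)‖ * r) (N : ℕ) :
    ‖∑ n ∈ Icc 1 N with p ∣ n, f n * (n.factorization p * Real.log p : ℝ) -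
        ∑ m ∈ Icc 1 (N / p), f p * Real.log p * f m‖ ≤
      primePowerWeight f p * ∑ m ∈ Icc 1 N, ‖f m‖ := by
  have hne {n : ℕ} (hn : n ∈ Icc 1 N) : n ≠ 0 := Nat.one_le_iff_ne_zero.mp (mem_Icc.mp hn).1
  have hw := hasSum_primePowerWeightTerm hsum
  rw [← sum_filter_dvd_div hp.pos N fun m => f p * Real.log p * f m, ← sum_sub_distrib,
    ← sum_subset (s₁ := {n ∈ Icc 1 N | p ^ 2 ∣ n})
      (fun n hn => mem_filter.mpr ((mem_filter.mp hn).imp_right (dvd_pow_self p two_ne_zero).trans))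
      fun n hn hn' => hf.mul_factorization_mul_log_sub_eq_zero hp (hne (mem_filter.mp hn).1)
        (mem_filter.mp hn).2 fun h => hn' (mem_filter.mpr ⟨(mem_filter.mp hn).1, h⟩)]
  calc ‖∑ n ∈ Icc 1 N with p ^ 2 ∣ n,
          (f n * (n.factorization p * Real.log p : ℝ) - f p * Real.log p * f (n / p))‖
      ≤ ∑ n ∈ Icc 1 N with p ^ 2 ∣ n,
          primePowerWeightTerm f p (n.factorization p - 2) * ‖f (ordCompl[p] n)‖ :=
        norm_sum_le_of_le _ fun n hn => hf.norm_mul_factorization_mul_log_sub_le hp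
          (hne (mem_filter.mp hn).1) (mem_filter.mp hn).2
    _ ≤ primePowerWeight f p * ∑ m ∈ Icc 1 N, ‖f m‖ :=
        (sum_filter_pow_dvd_le hp 2 N (primePowerWeightTerm_nonneg f p) hw.summable
          fun m => norm_nonneg _).trans_eq (by rw [hw.tsum_eq])

end

section Recursion

variable {f g : ℕ → ℂ} {κ : ℂ}

theorem norm_sum_mul_log_sub_sum_primesLE_le (hf : IsMult f) (hw : HasSummableWeights f) {x : ℝ}
    (hx : 0 ≤ x) :
    ‖∑ n ∈ Icc 1 ⌊x⌋₊, f n * (Real.log n : ℂ) -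
        ∑ m ∈ Icc 1 ⌊x⌋₊, ∑ p ∈ primesLE (x / m), f p * Real.log p * f m‖ ≤
      (∑' p : Nat.Primes, primePowerWeight f p) * ∑ m ∈ Icc 1 ⌊x⌋₊, ‖f m‖ := by
  have hfloor : primesLE (⌊x⌋₊ : ℝ) = primesLE x := by rw [primesLE, primesLE, Nat.floor_natCast]
  rw [sum_mul_log_eq_sum_primesLE, hfloor, ← primesLE_div_swap hx (fun p => f p * Real.log p) f,
    ← sum_sub_distrib]
  calc ‖∑ p ∈ primesLE x,
          (∑ n ∈ Icc 1 ⌊x⌋₊ with p ∣ n, f n * (n.factorization p * Real.log p : ℝ) -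
            ∑ m ∈ Icc 1 ⌊x / p⌋₊, f p * Real.log p * f m)‖
      ≤ ∑ p ∈ primesLE x, primePowerWeight f p * ∑ m ∈ Icc 1 ⌊x⌋₊, ‖f m‖ := by
        refine norm_sum_le_of_le _ fun p hp => ?_
        have hp := (mem_primesLE.mp hp).1
        rw [Nat.floor_div_natCast]
        exact hf.norm_sum_factorization_mul_log_sub_le hp (hw.summable_norm_mul p hp) _
    _ ≤ (∑' p : Nat.Primes, primePowerWeight f p) * ∑ m ∈ Icc 1 ⌊x⌋₊, ‖f m‖ := by
        rw [← sum_mul]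
        gcongr
        exact hw.sum_primesLE_le x

theorem CondA.exists_norm_sum_divId_sub_le (hA : CondA g κ) :
    ∃ C, ∀ x : ℝ, 1 ≤ x →
      ‖∑ p ∈ primesLE x, divId g p * (Real.log p : ℂ) - κ * (Real.log x : ℂ)‖ ≤ C := by
  obtain ⟨C, hC⟩ := hA
  refine ⟨max C (‖κ‖ * Real.log 2), fun x hx => ?_⟩
  simp_rw [divId, div_mul_eq_mul_div]
  rcases le_or_gt 2 x with hx2 | hx2
  · exact (hC x hx2).trans (le_max_left _ _)
  · have hempty : primesLE x = ∅ := eq_empty_of_forall_notMem fun p hp => by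
      obtain ⟨hp, hpx⟩ := mem_primesLE.mp hp
      have : (2 : ℝ) ≤ p := mod_cast hp.two_le
      linarith
    rw [hempty, sum_empty, zero_sub, norm_neg, norm_mul, Complex.norm_real,
      Real.norm_of_nonneg (Real.log_nonneg hx)]
    exact (mul_le_mul_of_nonneg_left (Real.log_le_log (by linarith) hx2.le)
      (norm_nonneg κ)).trans (le_max_right _ _)

theorem exists_norm_mul_summatory_sub_le (hf : IsMult f) (hw : HasSummableWeights f)
    (hA : ∃ C, ∀ x : ℝ, 1 ≤ x →
      ‖∑ p ∈ primesLE x, f p * (Real.log p : ℂ) - κ * (Real.log x : ℂ)‖ ≤ C) :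
    ∃ C, ∀ t : ℝ, ‖t * summatory f t - (κ + 1) * summatoryPrimitive f t‖ ≤
      C * ∑ n ∈ Icc 1 ⌊Real.exp t⌋₊, ‖f n‖ := by
  obtain ⟨C, hC⟩ := hA
  refine ⟨(∑' p : Nat.Primes, primePowerWeight f p) + C, fun t => ?_⟩
  have hprim : κ * summatoryPrimitive f t =
      ∑ m ∈ Icc 1 ⌊Real.exp t⌋₊, κ * (Real.log (Real.exp t / m) : ℂ) * f m := by
    rw [summatoryPrimitive, mul_sum]
    refine sum_congr rfl fun m hm => ?_
    have hm0 : (m : ℝ) ≠ 0 := Nat.cast_ne_zero.mpr (mem_Icc_floor_exp.mp hm).1.ne'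
    rw [Real.log_div (Real.exp_ne_zero t) hm0, Real.log_exp, mul_assoc, mul_comm (f m)]
  have hswap : ‖∑ m ∈ Icc 1 ⌊Real.exp t⌋₊, ∑ p ∈ primesLE (Real.exp t / m),
      f p * Real.log p * f m - κ * summatoryPrimitive f t‖ ≤
      C * ∑ m ∈ Icc 1 ⌊Real.exp t⌋₊, ‖f m‖ := by
    rw [hprim, ← sum_sub_distrib, mul_sum]
    refine norm_sum_le_of_le _ fun m hm => ?_
    rw [← sum_mul, ← sub_mul, norm_mul]
    gcongr
    obtain ⟨hm1, hmt⟩ := mem_Icc.mp hm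
    exact hC _ ((one_le_div (mod_cast hm1)).mpr ((Nat.le_floor_iff (Real.exp_pos t).le).mp hmt))
  rw [add_mul, one_mul, add_comm, ← sub_sub, mul_summatory_sub_summatoryPrimitive,
    add_mul]
  exact (norm_sub_le_norm_sub_add_norm_sub _ _ _).trans
    (add_le_add (norm_sum_mul_log_sub_sum_primesLE_le hf hw (Real.exp_pos t).le) hswap)

end Recursion

end Convolution

section NormSum

variable {f : ℕ → ℂ} {β C : ℝ}

theorem IsMult.sum_norm_le_prod_tsum (hf : IsMult f)
    (hsum : ∀ p : ℕ, p.Prime → Summable fun r : ℕ => ‖f (p ^ r)‖) (x : ℝ) :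
    ∑ n ∈ Icc 1 ⌊x⌋₊, ‖f n‖ ≤ ∏ p ∈ primesLE x, ∑' r : ℕ, ‖f (p ^ r)‖ := by
  obtain ⟨hsmooth, hprod⟩ :=
    EulerProduct.summable_and_hasSum_smoothNumbers_prod_primesBelow_tsum
      (f := fun n => ‖f n‖) (by simp [hf.1]) (fun h => by simp [hf.2 _ _ h])
      (fun {p} hp => by simpa only [norm_norm] using hsum p hp) (⌊x⌋₊ + 1)
  simp only [norm_norm] at hsmooth
  calc ∑ n ∈ Icc 1 ⌊x⌋₊, ‖f n‖
      = ∑ n ∈ (Icc 1 ⌊x⌋₊).subtype (· ∈ (⌊x⌋₊ + 1).smoothNumbers), ‖f n‖ := by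
        refine (sum_subtype_of_mem (fun n => ‖f n‖) fun n hn => ?_).symm
        obtain ⟨hn1, hnx⟩ := mem_Icc.mp hn
        exact Nat.mem_smoothNumbers_of_lt hn1 (Nat.lt_succ_of_le hnx)
    _ ≤ ∑' n : (⌊x⌋₊ + 1).smoothNumbers, ‖f n‖ :=
        hsmooth.sum_le_tsum _ fun _ _ => norm_nonneg _
    _ = ∏ p ∈ primesLE x, ∑' r : ℕ, ‖f (p ^ r)‖ := hprod.tsum_eq

theorem IsMult.tsum_norm_pow_le (hf : IsMult f) {p : ℕ}
    (hsum : Summable fun r : ℕ => ‖f (p ^ r)‖) :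
    ∑' r : ℕ, ‖f (p ^ r)‖ ≤ Real.exp (∑' r : ℕ, ‖f (p ^ (r + 2))‖) * (1 + ‖f p‖) := by
  have htail : 0 ≤ ∑' r : ℕ, ‖f (p ^ (r + 2))‖ := tsum_nonneg fun _ => norm_nonneg _
  rw [← hsum.sum_add_tsum_nat_add 2, sum_range_succ, sum_range_one, pow_zero, pow_one, hf.1,
    norm_one]
  calc 1 + ‖f p‖ + ∑' r : ℕ, ‖f (p ^ (r + 2))‖
      ≤ (∑' r : ℕ, ‖f (p ^ (r + 2))‖ + 1) * (1 + ‖f p‖) := by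
        nlinarith [mul_nonneg htail (norm_nonneg (f p))]
    _ ≤ Real.exp (∑' r : ℕ, ‖f (p ^ (r + 2))‖) * (1 + ‖f p‖) := by
        gcongr
        exact Real.add_one_le_exp _

theorem IsMult.sum_norm_le_exp_mul_prod (hf : IsMult f) (hw : HasSummableWeights f) (x : ℝ) :
    ∑ n ∈ Icc 1 ⌊x⌋₊, ‖f n‖ ≤
      Real.exp ((∑' p : Nat.Primes, primePowerWeight f p) / Real.log 2) *
        ∏ p ∈ primesLE x, (1 + ‖f p‖) := by
  have hlog : 0 < Real.log 2 := Real.log_pos one_lt_two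
  calc ∑ n ∈ Icc 1 ⌊x⌋₊, ‖f n‖
      ≤ ∏ p ∈ primesLE x, ∑' r : ℕ, ‖f (p ^ r)‖ :=
        hf.sum_norm_le_prod_tsum (fun p hp => hw.summable_norm hp) x
    _ ≤ ∏ p ∈ primesLE x, (Real.exp (primePowerWeight f p / Real.log 2) * (1 + ‖f p‖)) := by
        refine prod_le_prod (fun _ _ => tsum_nonneg fun _ => norm_nonneg _) fun p hp => ?_
        have hp := (mem_primesLE.mp hp).1
        refine (hf.tsum_norm_pow_le (hw.summable_norm hp)).trans ?_
        gcongr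
        exact (le_div_iff₀ hlog).mpr (hw.tsum_norm_mul_log_two_le hp)
    _ ≤ Real.exp ((∑' p : Nat.Primes, primePowerWeight f p) / Real.log 2) *
          ∏ p ∈ primesLE x, (1 + ‖f p‖) := by
        rw [prod_mul_distrib, ← Real.exp_sum, ← sum_div]
        gcongr
        exact hw.sum_primesLE_le x

theorem CondC.exists_sum_norm_divId_le {g : ℕ → ℂ} (hC : CondC g β) (hf : IsMult (divId g))
    (hw : HasSummableWeights (divId g)) :
    ∃ C, ∀ x : ℝ, 2 ≤ x → ∑ n ∈ Icc 1 ⌊x⌋₊, ‖divId g n‖ ≤ C * Real.log x ^ β := by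
  obtain ⟨C, hC⟩ := hC
  refine ⟨Real.exp ((∑' p : Nat.Primes, primePowerWeight (divId g) p) / Real.log 2) * C,
    fun x hx => ?_⟩
  refine (hf.sum_norm_le_exp_mul_prod hw x).trans ?_
  rw [mul_assoc]
  gcongr
  simpa only [divId, norm_div, Complex.norm_natCast] using hC x hx

theorem LSeriesSummable_of_sum_norm_le_log_rpow
    (h : ∀ x : ℝ, 2 ≤ x → ∑ n ∈ Icc 1 ⌊x⌋₊, ‖f n‖ ≤ C * Real.log x ^ β) {s : ℝ} (hs : 0 < s) :
    LSeriesSummable f s := by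
  have hlog : (fun n : ℕ => ∑ k ∈ Icc 1 n, ‖f k‖) =O[atTop] fun n : ℕ => Real.log n ^ β := by
    refine .of_bound C ?_
    filter_upwards [eventually_ge_atTop 2] with n hn
    rw [Real.norm_of_nonneg (sum_nonneg fun _ _ => norm_nonneg _),
      Real.norm_of_nonneg (Real.rpow_nonneg (Real.log_natCast_nonneg n) β)]
    simpa only [Nat.floor_natCast] using h n (mod_cast hn)
  refine LSeriesSummable_of_sum_norm_bigO (r := s / 2) (hlog.trans ?_) (by positivity) ?_
  · exact (isLittleO_log_rpow_rpow_atTop β (half_pos hs)).isBigO.comp_tendsto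
      tendsto_natCast_atTop_atTop
  · rw [Complex.ofReal_re]
    exact half_lt_self hs

end NormSum

section PrimeDefect

/-- The deviation of `f` from `n ↦ κ / n` on the primes, extended by zero. -/
noncomputable def primeDefect (f : ℕ → ℂ) (κ : ℂ) (n : ℕ) : ℂ :=
  if n.Prime then f n - κ / n else 0

variable {a f : ℕ → ℂ} {κ G : ℂ}

theorem tendsto_LSeries_of_tendsto_sum_range (ha0 : a 0 = 0)
    (ha : ∀ s : ℝ, 0 < s → LSeriesSummable a s)
    (h : Tendsto (fun N => ∑ n ∈ range N, a n) atTop (nhds G)) :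
    Tendsto (fun s : ℝ => LSeries a s) (nhdsWithin 0 (Set.Ioi 0)) (nhds G) := by
  have hsummatory (t : ℝ) : summatory a t = ∑ n ∈ range (⌊Real.exp t⌋₊ + 1), a n := by
    rw [summatory, range_eq_Ico, sum_eq_sum_Ico_succ_bot (Nat.succ_pos _), ha0, zero_add]
    rfl
  have hfloor : Tendsto (fun t : ℝ => ⌊Real.exp t⌋₊ + 1) atTop atTop :=
    (tendsto_add_atTop_nat 1).comp (tendsto_nat_floor_atTop.comp Real.tendsto_exp_atTop)
  have hlim : (fun t => summatory a t - G * (t : ℂ) ^ (0 : ℂ)) =o[atTop]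
      fun t : ℝ => t ^ (0 : ℂ).re := by
    simp only [Complex.cpow_zero, mul_one, Complex.zero_re, Real.rpow_zero,
      Asymptotics.isLittleO_one_iff, hsummatory]
    exact tendsto_sub_nhds_zero_iff.mpr (h.comp hfloor)
  simpa using tendsto_cpow_mul_LSeries (by simp) ha hlim

theorem primeDefect_zero : primeDefect f κ 0 = 0 := if_neg Nat.not_prime_zero

theorem lSeriesSummable_primeDefect {s : ℝ} (hs : 0 < s) (hf : LSeriesSummable f s) :
    LSeriesSummable (primeDefect f κ) s := by
  have hinv : LSeriesSummable (fun n : ℕ => κ / n) s :=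
    LSeriesSummable_of_le_const_mul_rpow (x := 0) hs
      ⟨‖κ‖, fun n _ => by rw [norm_div, Complex.norm_natCast, zero_sub, Real.rpow_neg_one]; rfl⟩
  refine .of_norm_bounded (hf.sub hinv).norm fun n => LSeries.norm_term_le _ ?_
  rw [primeDefect]
  split_ifs
  · exact le_rfl
  · simp

theorem sum_range_succ_primeDefect_mul_log (N : ℕ) :
    ∑ n ∈ range (N + 1), primeDefect f κ n * (Real.log n : ℂ) =
      (∑ p ∈ primesLE N, f p * (Real.log p : ℂ) - κ * (Real.log N : ℂ)) -
        κ * (∑ p ∈ primesLE N, Real.log p / p - Real.log N : ℝ) := by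
  rw [primesLE, Nat.floor_natCast, Complex.ofReal_sub, Complex.ofReal_sum, mul_sub,
    sub_sub_sub_cancel_right, mul_sum, ← sum_sub_distrib, sum_filter]
  refine sum_congr rfl fun n _ => ?_
  rw [primeDefect, ite_mul, zero_mul]
  push_cast
  congr 1
  ring

theorem exists_tendsto_sum_primeDefect
    (hA : ∃ C, ∀ x : ℝ, 1 ≤ x →
      ‖∑ p ∈ primesLE x, f p * (Real.log p : ℂ) - κ * (Real.log x : ℂ)‖ ≤ C) :
    ∃ G, Tendsto (fun N => ∑ n ∈ range N, primeDefect f κ n) atTop (nhds G) := by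
  obtain ⟨C, hC⟩ := hA
  obtain ⟨C', hC'⟩ := exists_abs_sum_log_div_primesLE_sub_log_le
  have hC0 : 0 ≤ C := (norm_nonneg _).trans (hC 1 le_rfl)
  have hC'0 : 0 ≤ C' := (abs_nonneg _).trans (hC' 1 le_rfl)
  refine exists_tendsto_sum_range_of_norm_sum_mul_log_le (C := C + ‖κ‖ * C') fun n => ?_
  rcases n with _ | _ | N
  · simp only [range_zero, sum_empty, norm_zero]
    positivity
  · simp only [zero_add, range_one, sum_singleton, primeDefect_zero, zero_mul, norm_zero]
    positivity
  · rw [sum_range_succ_primeDefect_mul_log]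
    refine (norm_sub_le _ _).trans (add_le_add (hC _ (by simp)) ?_)
    rw [norm_mul, Complex.norm_real]
    gcongr
    exact hC' _ (by simp)

end PrimeDefect

section EulerFactorBounds

theorem norm_exp_sub_one_le_norm_mul_exp (w : ℂ) : ‖Complex.exp w - 1‖ ≤ ‖w‖ * Real.exp ‖w‖ := by
  simpa using Complex.norm_exp_sub_sum_le_norm_mul_exp w 1

theorem norm_log_one_sub_add_self_le {z : ℂ} (hz : ‖z‖ ≤ 1 / 2) :
    ‖Complex.log (1 - z) + z‖ ≤ ‖z‖ ^ 2 := by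
  have hlog := Complex.norm_log_one_add_sub_self_le (z := -z) (by rw [norm_neg]; linarith)
  rw [norm_neg, sub_neg_eq_add, ← sub_eq_add_neg] at hlog
  have hinv : (1 - ‖z‖)⁻¹ ≤ 2 := by
    rw [inv_le_comm₀ (by linarith) two_pos]
    linarith
  nlinarith [sq_nonneg ‖z‖]

theorem norm_one_sub_cpow_mul_exp_sub_one_le (κ : ℂ) {z : ℂ} (hz : ‖z‖ ≤ 1 / 2) :
    ‖(1 - z) ^ κ * Complex.exp (κ * z) - 1‖ ≤ ‖κ‖ * Real.exp ‖κ‖ * ‖z‖ ^ 2 := by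
  have hne : 1 - z ≠ 0 := sub_ne_zero.mpr fun h => by
    rw [← h, norm_one] at hz
    linarith
  have hexp : (1 - z) ^ κ * Complex.exp (κ * z) =
      Complex.exp (κ * (Complex.log (1 - z) + z)) := by
    rw [Complex.cpow_def_of_ne_zero hne, ← Complex.exp_add]
    congr 1
    ring
  have hle : ‖κ * (Complex.log (1 - z) + z)‖ ≤ ‖κ‖ * ‖z‖ ^ 2 := by
    rw [norm_mul]
    gcongr
    exact norm_log_one_sub_add_self_le hz
  have hsq : ‖z‖ ^ 2 ≤ 1 := pow_le_one₀ (norm_nonneg z) (by linarith)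
  calc ‖(1 - z) ^ κ * Complex.exp (κ * z) - 1‖
      ≤ ‖κ * (Complex.log (1 - z) + z)‖ * Real.exp ‖κ * (Complex.log (1 - z) + z)‖ := by
        rw [hexp]
        exact norm_exp_sub_one_le_norm_mul_exp _
    _ ≤ ‖κ‖ * ‖z‖ ^ 2 * Real.exp ‖κ‖ := by
        gcongr
        exact hle.trans (mul_le_of_le_one_right (norm_nonneg κ) hsq)
    _ = ‖κ‖ * Real.exp ‖κ‖ * ‖z‖ ^ 2 := by ring

theorem norm_one_add_add_mul_exp_neg_sub_one_le (z δ : ℂ) :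
    ‖(1 + z + δ) * Complex.exp (-z) - 1‖ ≤ Real.exp ‖z‖ * (2 * ‖z‖ ^ 2 + ‖δ‖) := by
  have hfirst : ‖Complex.exp (-z) - 1‖ ≤ ‖z‖ * Real.exp ‖z‖ := by
    simpa only [norm_neg] using norm_exp_sub_one_le_norm_mul_exp (-z)
  have hsecond : ‖Complex.exp (-z) - 1 + z‖ ≤ ‖z‖ ^ 2 * Real.exp ‖z‖ := by
    simpa [sum_range_succ, ← sub_sub] using Complex.norm_exp_sub_sum_le_norm_mul_exp (-z) 2
  have hexp : ‖Complex.exp (-z)‖ ≤ Real.exp ‖z‖ := by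
    simpa only [norm_neg] using Complex.norm_exp_le_exp_norm (-z)
  calc ‖(1 + z + δ) * Complex.exp (-z) - 1‖
      = ‖(Complex.exp (-z) - 1 + z) + z * (Complex.exp (-z) - 1) + δ * Complex.exp (-z)‖ := by
        congr 1
        ring
    _ ≤ ‖Complex.exp (-z) - 1 + z‖ + ‖z‖ * ‖Complex.exp (-z) - 1‖ +
          ‖δ‖ * ‖Complex.exp (-z)‖ := by
        simpa only [norm_mul] using
          norm_add₃_le (a := Complex.exp (-z) - 1 + z) (b := z * (Complex.exp (-z) - 1))
            (c := δ * Complex.exp (-z))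
    _ ≤ ‖z‖ ^ 2 * Real.exp ‖z‖ + ‖z‖ * (‖z‖ * Real.exp ‖z‖) + ‖δ‖ * Real.exp ‖z‖ := by gcongr
    _ = Real.exp ‖z‖ * (2 * ‖z‖ ^ 2 + ‖δ‖) := by ring

theorem norm_mul_sub_one_le_of_le {R : Type*} [NormedRing R] {a b : R} {A B : ℝ}
    (ha : ‖a - 1‖ ≤ A) (hb : ‖b - 1‖ ≤ B) : ‖a * b - 1‖ ≤ A * B + A + B := by
  calc ‖a * b - 1‖ = ‖(a - 1) * (b - 1) + (a - 1) + (b - 1)‖ := by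
        congr 1
        noncomm_ring
    _ ≤ ‖a - 1‖ * ‖b - 1‖ + ‖a - 1‖ + ‖b - 1‖ :=
        norm_add₃_le.trans (by gcongr; exact norm_mul_le _ _)
    _ ≤ A * B + A + B := by
        gcongr
        exact (norm_nonneg _).trans ha

end EulerFactorBounds

section RegularizedEulerFactor

/-- The Euler factor at `p` of `ζ(1 + s)^(-κ) * LSeries f s`, which for `s = 0` and `f n = g n / n`
is `eulerFactor g κ p`. -/
noncomputable def twistedEulerFactor (f : ℕ → ℂ) (κ : ℂ) (s : ℝ) (p : ℕ) : ℂ :=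
  (1 - ((p : ℝ) ^ (-(1 + s)) : ℝ)) ^ κ * ∑' r : ℕ, LSeries.term f s (p ^ r)

/-- `twistedEulerFactor` with its first-order part divided out: unlike the product of the factors
themselves, the product of these converges absolutely. -/
noncomputable def regularizedEulerFactor (f : ℕ → ℂ) (κ : ℂ) (s : ℝ) (p : ℕ) : ℂ :=
  twistedEulerFactor f κ s p * Complex.exp (-LSeries.term (primeDefect f κ) s p)

variable {f : ℕ → ℂ} {κ : ℂ} {p : ℕ} {s : ℝ}

theorem twistedEulerFactor_zero (g : ℕ → ℂ) (κ : ℂ) (hp : p.Prime) :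
    twistedEulerFactor (divId g) κ 0 p = eulerFactor g κ p := by
  rw [twistedEulerFactor, eulerFactor]
  congr 1
  · simp [Real.rpow_neg_one]
  · refine tsum_congr fun r => ?_
    rw [LSeries.term_of_ne_zero (pow_ne_zero r hp.ne_zero), divId]
    simp

theorem norm_term_le_norm (hs : 0 ≤ s) (n : ℕ) : ‖LSeries.term f s n‖ ≤ ‖f n‖ := by
  rcases eq_or_ne n 0 with rfl | hn
  · simp
  rw [LSeries.norm_term_eq, if_neg hn, Complex.ofReal_re]
  exact div_le_self (norm_nonneg _)
    (Real.one_le_rpow (mod_cast Nat.one_le_iff_ne_zero.mpr hn) hs)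

theorem term_primeDefect (hp : p.Prime) :
    LSeries.term (primeDefect f κ) s p =
      LSeries.term f s p - κ * ((p : ℝ) ^ (-(1 + s)) : ℝ) := by
  have hp0 : (0 : ℝ) < p := mod_cast hp.pos
  rw [LSeries.term_of_ne_zero hp.ne_zero, LSeries.term_of_ne_zero hp.ne_zero, primeDefect,
    if_pos hp, sub_div, div_div, div_eq_mul_inv κ, Real.rpow_neg hp0.le, Real.rpow_add hp0,
    Real.rpow_one, Complex.ofReal_inv, Complex.ofReal_mul, Complex.ofReal_cpow hp0.le,
    Complex.ofReal_natCast]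

theorem rpow_neg_one_add_le_inv (hp : p.Prime) (hs : 0 ≤ s) :
    (p : ℝ) ^ (-(1 + s)) ≤ (p : ℝ)⁻¹ := by
  rw [← Real.rpow_neg_one]
  exact Real.rpow_le_rpow_of_exponent_le (mod_cast hp.one_le) (by linarith)

theorem IsMult.tsum_term_pow_eq (hf : IsMult f) (hsum : Summable fun r : ℕ => ‖f (p ^ r)‖)
    (hs : 0 ≤ s) :
    ∑' r : ℕ, LSeries.term f s (p ^ r) =
      1 + LSeries.term f s p + ∑' r : ℕ, LSeries.term f s (p ^ (r + 2)) := by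
  have hterm : Summable fun r : ℕ => LSeries.term f s (p ^ r) :=
    .of_norm_bounded hsum fun r => norm_term_le_norm hs _
  rw [← hterm.sum_add_tsum_nat_add 2, sum_range_succ, sum_range_one, pow_zero, pow_one,
    LSeries.term_of_ne_zero one_ne_zero, hf.1, Nat.cast_one, Complex.one_cpow, div_one]

theorem norm_regularizedEulerFactor_sub_one_le (hf : IsMult f) (hp : p.Prime)
    (hsum : Summable fun r : ℕ => ‖f (p ^ r)‖) (hs : 0 ≤ s) {A B : ℝ}
    (hA : ‖κ‖ * Real.exp ‖κ‖ * (p : ℝ)⁻¹ ^ 2 ≤ A)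
    (hB : Real.exp ‖f p‖ * (2 * ‖f p‖ ^ 2 + ∑' r : ℕ, ‖f (p ^ (r + 2))‖) ≤ B) :
    ‖regularizedEulerFactor f κ s p - 1‖ ≤ A * B + A + B := by
  set y : ℝ := (p : ℝ) ^ (-(1 + s))
  set z := LSeries.term f s p
  set δ := ∑' r : ℕ, LSeries.term f s (p ^ (r + 2))
  have hy : ‖(y : ℂ)‖ ≤ (p : ℝ)⁻¹ := by
    rw [Complex.norm_real, Real.norm_of_nonneg (Real.rpow_nonneg p.cast_nonneg _)]
    exact rpow_neg_one_add_le_inv hp hs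
  have hy_half : ‖(y : ℂ)‖ ≤ 1 / 2 := hy.trans <| by
    rw [one_div]
    exact inv_anti₀ two_pos (mod_cast hp.two_le)
  have hz : ‖z‖ ≤ ‖f p‖ := norm_term_le_norm hs p
  have hδ : ‖δ‖ ≤ ∑' r : ℕ, ‖f (p ^ (r + 2))‖ :=
    tsum_of_norm_bounded ((summable_nat_add_iff 2).mpr hsum).hasSum
      fun r => norm_term_le_norm hs _
  have hfactor : regularizedEulerFactor f κ s p =
      ((1 - (y : ℂ)) ^ κ * Complex.exp (κ * y)) * ((1 + z + δ) * Complex.exp (-z)) := by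
    rw [regularizedEulerFactor, twistedEulerFactor, hf.tsum_term_pow_eq hsum hs,
      term_primeDefect hp, neg_sub, sub_eq_add_neg (κ * _), Complex.exp_add]
    ring
  rw [hfactor]
  refine norm_mul_sub_one_le_of_le ?_ ?_
  · refine (norm_one_sub_cpow_mul_exp_sub_one_le κ hy_half).trans (le_trans ?_ hA)
    gcongr
  · refine (norm_one_add_add_mul_exp_neg_sub_one_le z δ).trans (le_trans ?_ hB)
    gcongr

theorem HasSummableWeights.exp_norm_mul_le (hw : HasSummableWeights f) (p : Nat.Primes) :
    Real.exp ‖f p‖ * (2 * ‖f p‖ ^ 2 + ∑' r : ℕ, ‖f (p ^ (r + 2))‖) ≤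
      3 * Real.exp (1 + (∑' q : Nat.Primes, primePowerWeight f q) / Real.log 2) / Real.log 2 *
        primePowerWeight f p := by
  have hlog : 0 < Real.log 2 := Real.log_pos one_lt_two
  have hsq := (le_div_iff₀ hlog).mpr (hw.sq_norm_mul_log_two_le p.2)
  have htail := (le_div_iff₀ hlog).mpr (hw.tsum_norm_mul_log_two_le p.2)
  have hweight : primePowerWeight f p ≤ ∑' q : Nat.Primes, primePowerWeight f q :=
    hw.summable_weight.le_tsum p fun q _ => primePowerWeight_nonneg f q
  have hnorm : ‖f p‖ ≤ 1 + (∑' q : Nat.Primes, primePowerWeight f q) / Real.log 2 := by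
    have := div_le_div_of_nonneg_right hweight hlog.le
    nlinarith [sq_nonneg (‖f p‖ - 1)]
  calc Real.exp ‖f p‖ * (2 * ‖f p‖ ^ 2 + ∑' r : ℕ, ‖f (p ^ (r + 2))‖)
      ≤ Real.exp (1 + (∑' q : Nat.Primes, primePowerWeight f q) / Real.log 2) *
          (2 * (primePowerWeight f p / Real.log 2) + primePowerWeight f p / Real.log 2) := by
        gcongr
    _ = _ := by ring

theorem exists_summable_norm_regularizedEulerFactor_sub_one_le (hf : IsMult f)
    (hw : HasSummableWeights f) (κ : ℂ) :
    ∃ b : Nat.Primes → ℝ, Summable b ∧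
      ∀ s : ℝ, 0 ≤ s → ∀ p : Nat.Primes, ‖regularizedEulerFactor f κ s p - 1‖ ≤ b p := by
  set K := ‖κ‖ * Real.exp ‖κ‖
  set L :=
    3 * Real.exp (1 + (∑' q : Nat.Primes, primePowerWeight f q) / Real.log 2) / Real.log 2
  have hinv : Summable fun p : Nat.Primes => K * (p : ℝ)⁻¹ ^ 2 := by
    simp_rw [inv_pow]
    exact ((Real.summable_nat_pow_inv.mpr one_lt_two).subtype {p : ℕ | p.Prime}).mul_left K
  have hprod : Summable fun p : Nat.Primes => K * (p : ℝ)⁻¹ ^ 2 * (L * primePowerWeight f p) :=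
    (hinv.mul_of_nonneg (hw.summable_weight.mul_left L) (fun p => by positivity)
      fun p => mul_nonneg (by positivity) (primePowerWeight_nonneg f p)).comp_injective
        (i := fun p => (p, p)) fun _ _ h => (Prod.mk.inj h).1
  exact ⟨_, (hprod.add hinv).add (hw.summable_weight.mul_left L), fun s hs p =>
    norm_regularizedEulerFactor_sub_one_le hf p.2 (hw.summable_norm p.2) hs le_rfl
      (hw.exp_norm_mul_le p)⟩

theorem tendsto_regularizedEulerFactor (hp : p.Prime)
    (hsum : Summable fun r : ℕ => ‖f (p ^ r)‖) :
    Tendsto (fun s => regularizedEulerFactor f κ s p) (nhdsWithin 0 (Set.Ioi 0))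
      (nhds (regularizedEulerFactor f κ 0 p)) := by
  have hp0 : (0 : ℝ) < p := mod_cast hp.pos
  have hterm (a : ℕ → ℂ) (n : ℕ) : Tendsto (fun s : ℝ => LSeries.term a s n)
      (nhdsWithin 0 (Set.Ioi 0)) (nhds (LSeries.term a (0 : ℝ) n)) :=
    ((LSeries.hasDerivAt_term a n _).continuousAt.tendsto.comp
      (Complex.continuous_ofReal.tendsto 0)).mono_left nhdsWithin_le_nhds
  refine .mul (.mul ?_ ?_) ((Complex.continuous_exp.tendsto _).comp (hterm _ p).neg)
  · refine ContinuousAt.continuousWithinAt (.cpow (by fun_prop (disch := simp [hp0.ne']))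
      continuousAt_const ?_)
    have hlt : (p : ℝ) ^ (-(1 + (0 : ℝ))) < 1 :=
      Real.rpow_lt_one_of_one_lt_of_neg (mod_cast hp.one_lt) (by norm_num)
    rw [← Complex.ofReal_one, ← Complex.ofReal_sub, Complex.ofReal_mem_slitPlane]
    exact sub_pos.mpr hlt
  · refine tendsto_tsum_of_dominated_convergence hsum (fun r => hterm f _) ?_
    filter_upwards [self_mem_nhdsWithin] with s hs r
    exact norm_term_le_norm (Set.mem_Ioi.mp hs).le _

end RegularizedEulerFactor

section EulerProduct

variable {f : ℕ → ℂ} {κ G : ℂ} {s : ℝ}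

theorem tendsto_prod_filter_prime_of_hasProd {M : Type*} [CommMonoid M] [TopologicalSpace M]
    {F : ℕ → M} {P : M} (h : HasProd (fun p : Nat.Primes => F p) P) :
    Tendsto (fun N => ∏ p ∈ (range N).filter Nat.Prime, F p) atTop (nhds P) := by
  have hind := (hasProd_subtype_iff_mulIndicator (f := F) (s := {p | p.Prime})).mp h
  refine hind.tendsto_prod_nat.congr fun N => ?_
  rw [prod_filter]
  exact prod_congr rfl fun p _ => Set.mulIndicator_apply {p | p.Prime} F p

theorem prod_twistedEulerFactor (f : ℕ → ℂ) (κ : ℂ) (s : ℝ) (N : ℕ) :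
    ∏ p ∈ (range N).filter Nat.Prime, twistedEulerFactor f κ s p =
      Complex.exp (∑ n ∈ range N, LSeries.term (primeDefect f κ) s n) *
        ∏ p ∈ (range N).filter Nat.Prime, regularizedEulerFactor f κ s p := by
  have hsum : ∑ n ∈ range N, LSeries.term (primeDefect f κ) s n =
      ∑ p ∈ (range N).filter Nat.Prime, LSeries.term (primeDefect f κ) s p :=
    (sum_filter_of_ne fun n _ hn => by
      contrapose! hn
      simp [LSeries.term, primeDefect, hn]).symm
  rw [hsum, Complex.exp_sum, ← prod_mul_distrib]
  refine prod_congr rfl fun p _ => ?_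
  rw [regularizedEulerFactor, mul_left_comm, ← Complex.exp_add, add_neg_cancel, Complex.exp_zero,
    mul_one]

theorem summable_norm_regularizedEulerFactor_sub_one (hf : IsMult f) (hw : HasSummableWeights f)
    (κ : ℂ) (hs : 0 ≤ s) :
    Summable fun p : Nat.Primes => ‖regularizedEulerFactor f κ s p - 1‖ := by
  obtain ⟨b, hb, hRb⟩ := exists_summable_norm_regularizedEulerFactor_sub_one_le hf hw κ
  exact .of_nonneg_of_le (fun _ => norm_nonneg _) (hRb s hs) hb

theorem tendsto_prod_twistedEulerFactor (hf : IsMult f) (hw : HasSummableWeights f) (hs : 0 ≤ s)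
    (hG : Tendsto (fun N => ∑ n ∈ range N, LSeries.term (primeDefect f κ) s n) atTop (nhds G)) :
    Tendsto (fun N => ∏ p ∈ (range N).filter Nat.Prime, twistedEulerFactor f κ s p) atTop
      (nhds (Complex.exp G * ∏' p : Nat.Primes, regularizedEulerFactor f κ s p)) := by
  simp_rw [prod_twistedEulerFactor]
  have hprod := (multipliable_one_add_of_summable
    (summable_norm_regularizedEulerFactor_sub_one hf hw κ hs)).hasProd
  simp only [add_sub_cancel] at hprod
  exact ((Complex.continuous_exp.tendsto G).comp hG).mul
    (tendsto_prod_filter_prime_of_hasProd hprod)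

theorem tendsto_tprod_regularizedEulerFactor (hf : IsMult f) (hw : HasSummableWeights f) (κ : ℂ) :
    Tendsto (fun s => ∏' p : Nat.Primes, regularizedEulerFactor f κ s p)
      (nhdsWithin 0 (Set.Ioi 0)) (nhds (∏' p : Nat.Primes, regularizedEulerFactor f κ 0 p)) := by
  obtain ⟨b, hb, hRb⟩ := exists_summable_norm_regularizedEulerFactor_sub_one_le hf hw κ
  have := tendsto_tprod_one_add_of_dominated_convergence hb
    (fun p : Nat.Primes =>
      (tendsto_regularizedEulerFactor (κ := κ) p.2 (hw.summable_norm p.2)).sub_const 1)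
    (by filter_upwards [self_mem_nhdsWithin] with s hs p using hRb s (Set.mem_Ioi.mp hs).le p)
  simpa only [add_sub_cancel] using this

theorem tendsto_prod_tsum_term_pow (hf : IsMult f) (hs : LSeriesSummable f s) :
    Tendsto (fun N => ∏ p ∈ (range N).filter Nat.Prime, ∑' r : ℕ, LSeries.term f s (p ^ r)) atTop
      (nhds (LSeries f s)) := by
  refine EulerProduct.eulerProduct ?_ (fun {m n} hmn => ?_) hs.norm (LSeries.term_zero f s)
  · simp [hf.1]
  · rcases eq_or_ne m 0 with rfl | hm
    · simp
    rcases eq_or_ne n 0 with rfl | hn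
    · simp
    rw [LSeries.term_of_ne_zero (mul_ne_zero hm hn), LSeries.term_of_ne_zero hm,
      LSeries.term_of_ne_zero hn, hf.2 m n hmn, Nat.cast_mul, Complex.natCast_mul_natCast_cpow,
      mul_div_mul_comm]

theorem tsum_one_div_rpow_one_add_pos (hs : 0 < s) : 0 < ∑' n : ℕ, 1 / (n : ℝ) ^ (1 + s) :=
  (Real.summable_one_div_nat_rpow.mpr (by linarith)).tsum_pos (fun n => by positivity) 1 (by simp)

theorem prod_ofReal_cpow {ι : Type*} {S : Finset ι} {y : ι → ℝ} (hy : ∀ i ∈ S, 0 ≤ y i) (κ : ℂ) :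
    ∏ i ∈ S, (y i : ℂ) ^ κ = ((∏ i ∈ S, y i : ℝ) : ℂ) ^ κ := by
  induction S using Finset.cons_induction with
  | empty => simp
  | cons i S hi ih =>
    have hS : ∀ j ∈ S, 0 ≤ y j := fun j hj => hy j (mem_cons_of_mem hj)
    rw [prod_cons, prod_cons, ih hS, Complex.ofReal_mul,
      Complex.mul_cpow_ofReal_nonneg (hy i (mem_cons_self i S)) (prod_nonneg hS)]

theorem tendsto_prod_one_sub_rpow (hs : 0 < s) :
    Tendsto (fun N => ∏ p ∈ (range N).filter Nat.Prime, (1 - (p : ℝ) ^ (-(1 + s)))) atTop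
      (nhds (∑' n : ℕ, 1 / (n : ℝ) ^ (1 + s))⁻¹) := by
  let φ : ℕ →*₀ ℝ :=
    { toFun := fun n => (n : ℝ) ^ (-(1 + s))
      map_zero' := by rw [Nat.cast_zero, Real.zero_rpow (by linarith)]
      map_one' := by simp
      map_mul' := fun m n => by
        rw [Nat.cast_mul, Real.mul_rpow m.cast_nonneg n.cast_nonneg] }
  have hφ (n : ℕ) : φ n = 1 / (n : ℝ) ^ (1 + s) := by
    rw [one_div, ← Real.rpow_neg n.cast_nonneg]
    rfl
  have hsum : Summable fun n => ‖φ n‖ := by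
    simpa only [hφ] using (Real.summable_one_div_nat_rpow.mpr (by linarith)).norm
  have hprod := EulerProduct.eulerProduct_completely_multiplicative hsum
  simp_rw [tsum_congr hφ, prod_inv_distrib] at hprod
  refine (hprod.inv₀ (tsum_one_div_rpow_one_add_pos hs).ne').congr fun N => ?_
  rw [inv_inv]
  rfl

theorem tendsto_prod_one_sub_rpow_cpow (κ : ℂ) (hs : 0 < s) :
    Tendsto (fun N => ∏ p ∈ (range N).filter Nat.Prime,
        (1 - ((p : ℝ) ^ (-(1 + s)) : ℝ) : ℂ) ^ κ) atTop
      (nhds ((((∑' n : ℕ, 1 / (n : ℝ) ^ (1 + s))⁻¹ : ℝ) : ℂ) ^ κ)) := by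
  have hpos := inv_pos.mpr (tsum_one_div_rpow_one_add_pos hs)
  refine (((Complex.continuous_ofReal.tendsto _).comp (tendsto_prod_one_sub_rpow hs)).cpow
    tendsto_const_nhds (Complex.ofReal_mem_slitPlane.mpr hpos)).congr fun N => ?_
  rw [Function.comp_apply, ← prod_ofReal_cpow fun p hp => ?_]
  · simp only [Complex.ofReal_sub, Complex.ofReal_one]
  · exact sub_nonneg.mpr (Real.rpow_le_one_of_one_le_of_nonpos
      (mod_cast (mem_filter.mp hp).2.one_le) (by linarith))

theorem inv_tsum_cpow_mul_LSeries_eq (hf : IsMult f) (hw : HasSummableWeights f) (κ : ℂ)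
    (hs : 0 < s) (hfs : LSeriesSummable f s) :
    (((∑' n : ℕ, 1 / (n : ℝ) ^ (1 + s))⁻¹ : ℝ) : ℂ) ^ κ * LSeries f s =
      Complex.exp (LSeries (primeDefect f κ) s) *
        ∏' p : Nat.Primes, regularizedEulerFactor f κ s p := by
  refine tendsto_nhds_unique
    ((tendsto_prod_one_sub_rpow_cpow κ hs).mul (tendsto_prod_tsum_term_pow hf hfs)) ?_
  simp_rw [← prod_mul_distrib]
  exact tendsto_prod_twistedEulerFactor hf hw hs.le
    (lSeriesSummable_primeDefect hs hfs).hasSum.tendsto_sum_nat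

theorem tendsto_mul_tsum_one_div_rpow_cpow (κ : ℂ) :
    Tendsto (fun s : ℝ => ((s * ∑' n : ℕ, 1 / (n : ℝ) ^ (1 + s) : ℝ) : ℂ) ^ κ)
      (nhdsWithin 0 (Set.Ioi 0)) (nhds 1) := by
  have hshift : Tendsto (fun s : ℝ => 1 + s) (nhdsWithin 0 (Set.Ioi 0))
      (nhdsWithin 1 (Set.Ioi 1)) := by
    refine tendsto_nhdsWithin_iff.mpr ⟨?_, ?_⟩
    · exact ((by fun_prop : Continuous fun s : ℝ => 1 + s).tendsto' 0 1 (add_zero 1)).mono_left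
        nhdsWithin_le_nhds
    · filter_upwards [self_mem_nhdsWithin] with s hs using lt_add_of_pos_right 1 (Set.mem_Ioi.mp hs)
  have hres := tendsto_sub_mul_tsum_nat_rpow.comp hshift
  simp only [Function.comp_def, add_sub_cancel_left] at hres
  simpa using ((Complex.continuous_ofReal.tendsto 1).comp hres).cpow
    (tendsto_const_nhds (x := κ)) (by simp)

theorem tendsto_prod_eulerFactor {g : ℕ → ℂ} (hf : IsMult (divId g))
    (hw : HasSummableWeights (divId g))
    (hG : Tendsto (fun N => ∑ n ∈ range N, primeDefect (divId g) κ n) atTop (nhds G)) :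
    Tendsto (fun N => ∏ p ∈ (range N).filter Nat.Prime, eulerFactor g κ p) atTop
      (nhds (Complex.exp G * ∏' p : Nat.Primes, regularizedEulerFactor (divId g) κ 0 p)) := by
  refine (tendsto_prod_twistedEulerFactor hf hw le_rfl (hG.congr fun N => ?_)).congr fun N => ?_
  · refine sum_congr rfl fun n _ => ?_
    rw [LSeries.term_def₀ primeDefect_zero, Complex.ofReal_zero, neg_zero, Complex.cpow_zero,
      mul_one]
  · exact prod_congr rfl fun p hp => twistedEulerFactor_zero g κ (mem_filter.mp hp).2

theorem tendsto_cpow_mul_LSeries_of_isMult (hf : IsMult f) (hw : HasSummableWeights f)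
    (hfs : ∀ s : ℝ, 0 < s → LSeriesSummable f s)
    (hG : Tendsto (fun N => ∑ n ∈ range N, primeDefect f κ n) atTop (nhds G)) :
    Tendsto (fun s : ℝ => (s : ℂ) ^ κ * LSeries f s) (nhdsWithin 0 (Set.Ioi 0))
      (nhds (Complex.exp G * ∏' p : Nat.Primes, regularizedEulerFactor f κ 0 p)) := by
  have hlim := (tendsto_mul_tsum_one_div_rpow_cpow κ).mul
    (((Complex.continuous_exp.tendsto G).comp (tendsto_LSeries_of_tendsto_sum_range
      primeDefect_zero (fun s hs => lSeriesSummable_primeDefect hs (hfs s hs)) hG)).mul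
      (tendsto_tprod_regularizedEulerFactor hf hw κ))
  rw [one_mul] at hlim
  refine hlim.congr' ?_
  filter_upwards [self_mem_nhdsWithin] with s hs
  have hZ := tsum_one_div_rpow_one_add_pos hs
  rw [Function.comp_apply, ← inv_tsum_cpow_mul_LSeries_eq hf hw κ hs (hfs s hs), ← mul_assoc,
    ← Complex.mul_cpow_ofReal_nonneg (mul_pos hs hZ).le (inv_pos.mpr hZ).le, ← Complex.ofReal_mul,
    mul_assoc, mul_inv_cancel₀ hZ.ne', mul_one]

end EulerProduct

section Asymptotics

variable {f : ℕ → ℂ} {κ : ℂ} {β C : ℝ}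

theorem exists_norm_summatory_log_sub_mul_cpow_le (hf : IsMult f) (hw : HasSummableWeights f)
    (hA : ∃ C, ∀ x : ℝ, 1 ≤ x →
      ‖∑ p ∈ primesLE x, f p * (Real.log p : ℂ) - κ * (Real.log x : ℂ)‖ ≤ C)
    (hβ : β < κ.re + 1)
    (hC : ∀ x : ℝ, 2 ≤ x → ∑ n ∈ Icc 1 ⌊x⌋₊, ‖f n‖ ≤ C * Real.log x ^ β) :
    ∃ c : ℂ, ∃ C', ∀ x : ℝ, 2 ≤ x →
      ‖summatory f (Real.log x) - c * (Real.log x : ℂ) ^ κ‖ ≤ C' * Real.log x ^ (β - 1) := by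
  obtain ⟨B, hB⟩ := exists_norm_mul_summatory_sub_le hf hw hA
  obtain ⟨c, C', hc⟩ := exists_norm_sub_mul_cpow_le_of_norm_mul_sub_le (κ := κ + 1)
    (C := |B| * C) (Real.log_pos one_lt_two) (by simpa using hβ)
    (continuous_summatoryPrimitive f).continuousOn
    (fun t _ => hasDerivWithinAt_summatoryPrimitive f t) fun t ht => by
      have hexp : 2 ≤ Real.exp t := (Real.log_le_iff_le_exp two_pos).mp ht
      calc ‖t * summatory f t - (κ + 1) * summatoryPrimitive f t‖
          ≤ |B| * ∑ n ∈ Icc 1 ⌊Real.exp t⌋₊, ‖f n‖ :=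
            (hB t).trans (mul_le_mul_of_nonneg_right (le_abs_self B) (by positivity))
        _ ≤ |B| * (C * t ^ β) := by
            gcongr
            simpa only [Real.log_exp] using hC _ hexp
        _ = |B| * C * t ^ β := (mul_assoc _ _ _).symm
  simp only [add_sub_cancel_right] at hc
  exact ⟨c, C', fun x hx => hc _ (Real.log_le_log two_pos hx)⟩

theorem isLittleO_rpow_rpow_atTop {p q : ℝ} (h : p < q) :
    (fun t : ℝ => t ^ p) =o[atTop] fun t => t ^ q := by
  refine Asymptotics.isLittleO_of_tendsto' ?_ ?_
  · filter_upwards [eventually_gt_atTop 0] with t ht hzero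
    exact absurd hzero (Real.rpow_pos_of_pos ht q).ne'
  · refine (tendsto_rpow_neg_atTop (sub_pos.mpr h)).congr' ?_
    filter_upwards [eventually_gt_atTop 0] with t ht
    rw [← Real.rpow_sub ht, neg_sub]

theorem isLittleO_summatory_sub_mul_cpow {c : ℂ} (hβ : β < κ.re + 1)
    (h : ∀ x : ℝ, 2 ≤ x →
      ‖summatory f (Real.log x) - c * (Real.log x : ℂ) ^ κ‖ ≤ C * Real.log x ^ (β - 1)) :
    (fun t => summatory f t - c * (t : ℂ) ^ κ) =o[atTop] fun t => t ^ κ.re := by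
  have hbound : (fun t => summatory f t - c * (t : ℂ) ^ κ) =O[atTop] fun t => t ^ (β - 1) := by
    refine .of_bound C ?_
    filter_upwards [eventually_ge_atTop (Real.log 2)] with t ht
    have ht0 : 0 ≤ t := (Real.log_pos one_lt_two).le.trans ht
    rw [Real.norm_of_nonneg (Real.rpow_nonneg ht0 _)]
    simpa only [Real.log_exp] using h _ ((Real.log_le_iff_le_exp two_pos).mp ht)
  exact hbound.trans_isLittleO (isLittleO_rpow_rpow_atTop (by linarith))

end Asymptotics

theorem stmt0 (g : ℕ → ℂ) (κ : ℂ) (β : ℝ) (hg : IsMult g)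
    (hκ : κ.im ^ 2 < 2 * κ.re + 1)
    (hA : CondA g κ) (hB : CondB g)
    (hβ0 : 0 ≤ β) (hβ : β < κ.re + 1) (hC : CondC g β) :
    ∃ P : ℂ,
      Tendsto (fun N : ℕ => ∏ p ∈ (Finset.range N).filter Nat.Prime, eulerFactor g κ p)
        atTop (nhds P) ∧
      ∃ C : ℝ, ∀ x : ℝ, 2 ≤ x →
        ‖Mg g x - (Complex.Gamma (κ + 1))⁻¹ * P * ((Real.log x : ℂ) ^ κ)‖ ≤
          C * Real.log x ^ (β - 1) := by
  have hre : -1 < κ.re := by nlinarith [sq_nonneg κ.im]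
  have hf := hg.divId
  have hw := hB.hasSummableWeights
  have hA' := hA.exists_norm_sum_divId_sub_le
  obtain ⟨K, hK⟩ := hC.exists_sum_norm_divId_le hf hw
  have hsum : ∀ s : ℝ, 0 < s → LSeriesSummable (divId g) s :=
    fun s hs => LSeriesSummable_of_sum_norm_le_log_rpow hK hs
  obtain ⟨G, hG⟩ := exists_tendsto_sum_primeDefect hA'
  refine ⟨_, tendsto_prod_eulerFactor hf hw hG, ?_⟩
  obtain ⟨c, C, hc⟩ := exists_norm_summatory_log_sub_mul_cpow_le hf hw hA' hβ hK
  refine ⟨C, fun x hx => ?_⟩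
  have hcP := tendsto_nhds_unique
    (tendsto_cpow_mul_LSeries hre hsum (isLittleO_summatory_sub_mul_cpow hβ hc))
    (tendsto_cpow_mul_LSeries_of_isMult hf hw hsum hG)
  have hΓ : Complex.Gamma (κ + 1) ≠ 0 :=
    Complex.Gamma_ne_zero_of_re_pos (by simpa using neg_lt_iff_pos_add.mp hre)
  have hM : Mg g x = summatory (divId g) (Real.log x) := by
    rw [summatory, Real.exp_log (by linarith)]
    rfl
  rw [hM, ← hcP, mul_comm c, inv_mul_cancel_left₀ hΓ]
  exact hc x hx
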